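/- Let f ∈ ℂ[x_1,…,x_n] be a polynomial that is tame in the sense that there exist C, δ > 0 such that ‖∇f(x)‖ ≥ δ whenever ‖x‖ ≥ C (in particular f has only finitely many critical points). Then the twisted de Rham cohomology H^k_f(ℂ) vanishes for all k ≠ n, and H^n_f(ℂ) is isomorphic as a ℂ-vector space to the Milnor (Jacobian) ring ℂ[x_1,…,x_n]/(∂f/∂x_1, …, ∂f/∂x_n); in particular dim_ℂ H^n_f(ℂ) equals the dimension of the Milnor ring. -/

import Mathlib

open MvPolynomial

noncomputable section

/-- Polynomial differential forms on `K^n`: a form assigns to each subset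
`s ⊆ {1,…,n}` (the indices of `dx_{i_1} ∧ ⋯ ∧ dx_{i_k}` with `i_1 < ⋯ < i_k`)
a polynomial coefficient. -/
abbrev Form (n : ℕ) (K : Type*) [CommRing K] :=
  Finset (Fin n) → MvPolynomial (Fin n) K

/-- The sign `(-1)^{#{j ∈ s | j < i}}`. -/
def sgn {n : ℕ} (K : Type*) [CommRing K] (s : Finset (Fin n)) (i : Fin n) :
    MvPolynomial (Fin n) K :=
  (-1) ^ (s.filter (fun j => j < i)).card

/-- The twisted de Rham differential `d_α ω = dω + α ∧ ω` associated to a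
(closed) polynomial 1-form `α = Σ_i α_i dx_i`. -/
def dTwist {n : ℕ} {K : Type*} [CommRing K]
    (α : Fin n → MvPolynomial (Fin n) K) :
    Form n K →ₗ[K] Form n K where
  toFun ω := fun s => ∑ i ∈ s,
    sgn K s i * (pderiv i (ω (s.erase i)) + α i * ω (s.erase i))
  map_add' ω₁ ω₂ := by
    funext s
    simp only [Pi.add_apply]
    rw [← Finset.sum_add_distrib]
    refine Finset.sum_congr rfl fun i _ => ?_
    simp only [map_add]
    ring
  map_smul' c ω := by
    funext s
    simp only [Pi.smul_apply, map_smul, RingHom.id_apply, Finset.smul_sum]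
    refine Finset.sum_congr rfl fun i _ => ?_
    simp [mul_add, mul_smul_comm, smul_add, mul_assoc]

/-- The (untwisted) polynomial de Rham differential. -/
abbrev dRham (n : ℕ) (K : Type*) [CommRing K] : Form n K →ₗ[K] Form n K :=
  dTwist (fun _ => 0)

/-- Multiplication of a form by a 1-form `α`, `ω ↦ α ∧ ω`. -/
def wedge1 {n : ℕ} {K : Type*} [CommRing K]
    (α : Fin n → MvPolynomial (Fin n) K) :
    Form n K →ₗ[K] Form n K where
  toFun ω := fun s => ∑ i ∈ s, sgn K s i * (α i * ω (s.erase i))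
  map_add' ω₁ ω₂ := by
    funext s
    simp only [Pi.add_apply]
    rw [← Finset.sum_add_distrib]
    refine Finset.sum_congr rfl fun i _ => ?_
    ring
  map_smul' c ω := by
    funext s
    simp only [Pi.smul_apply, RingHom.id_apply, Finset.smul_sum]
    refine Finset.sum_congr rfl fun i _ => ?_
    simp [mul_smul_comm]

/-- Forms of pure degree `k`: those supported on index sets of cardinality `k`. -/
def formDeg (n : ℕ) (K : Type*) [CommRing K] (k : ℕ) : Submodule K (Form n K) where
  carrier := {ω | ∀ s : Finset (Fin n), s.card ≠ k → ω s = 0}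
  add_mem' := by
    intro a b ha hb s hs
    simp [Pi.add_apply, ha s hs, hb s hs]
  zero_mem' := fun s _ => rfl
  smul_mem' := by
    intro c a ha s hs
    simp [Pi.smul_apply, ha s hs]

/-- Degree-`k` cocycles of the twisted de Rham complex. -/
def cocycles {n : ℕ} {K : Type*} [CommRing K]
    (α : Fin n → MvPolynomial (Fin n) K) (k : ℕ) : Submodule K (Form n K) :=
  formDeg n K k ⊓ LinearMap.ker (dTwist α)

/-- Degree-`k` coboundaries of the twisted de Rham complex. -/
def cobounds {n : ℕ} {K : Type*} [CommRing K]
    (α : Fin n → MvPolynomial (Fin n) K) (k : ℕ) : Submodule K (Form n K) :=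
  Submodule.map (dTwist α) (formDeg n K (k - 1))

/-- The degree-`k` twisted de Rham cohomology of the 1-form `α`. -/
abbrev Htwist {n : ℕ} {K : Type*} [CommRing K]
    (α : Fin n → MvPolynomial (Fin n) K) (k : ℕ) :=
  (cocycles α k) ⧸ (Submodule.comap (cocycles α k).subtype (cobounds α k))

/-- The differential `df` of a polynomial, as the family of coefficients of the
1-form `Σ_i (∂f/∂x_i) dx_i`. -/
def grad {n : ℕ} {K : Type*} [CommRing K] (f : MvPolynomial (Fin n) K) :
    Fin n → MvPolynomial (Fin n) K :=
  fun i => pderiv i f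

/-- The twisted de Rham cohomology `H^k_f(K)` of a polynomial `f`. -/
abbrev Hf {n : ℕ} {K : Type*} [CommRing K] (f : MvPolynomial (Fin n) K) (k : ℕ) :=
  Htwist (grad f) k

/-- The top form `dx_1 ∧ ⋯ ∧ dx_n`. -/
def topForm (n : ℕ) (K : Type*) [CommRing K] : Form n K :=
  fun s => if s = Finset.univ then 1 else 0

/-!
Let `ξ_i = ε ∂_i + ∂_i f`. At `ε = 1` these commuting operators are the components of `d_f`; at
`ε = 0` they are the multiplications by `∂_i f`. Tameness says that the closure of the graph of
`∇f` does not meet `∇f = 0` at infinity, so by the Nullstellensatz some power `x_i ^ N` is, at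
`ε = 0`, a combination of polynomials `ξ^α x^β` with `|β| < N`, or with `|β| ≤ N` and `α ≠ 0`.

The same holds at `ε = 1`. Indeed, everything is defined over a finitely generated ring `Λ`. The
leading forms of the relations at `ε = 1` make up an ideal of `Λ[x]`, a Jacobson ring with finite
residue fields, so it suffices that each maximal ideal `M` containing it contains `x_i`. If `p` is
the characteristic of `Λ[x] / M`, the identity `(∂_i + ∂_i f)^p = (∂_i f)^p` turns the `p`-th power
of the relation at `ε = 0` into one at `ε = 1` modulo `M ∩ Λ`, and the error is controlled by a
basis of standard `ξ^α x^β`, as in the theory of Gröbner bases.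

Hence `R[x] / ∑ ξ_i R[x]` has, for both values of `ε`, a finite basis defined over a common `Λ`, and
the two ranks can be compared by counting elements over a finite residue field. There the image of
the `ξ_i^p` at `ε = 1` has index `(index of the image of the ξ_i)^(p^n)`, because of the relation
`[ξ_i, x_i] = 1`, and also `(index of the Jacobian ideal)^(p^n)`, because a polynomial is uniquely
of the form `∑ x^β g_β^p` with exponents `β` in `[0, p)^n`.

Below the top degree, `[ξ_i, x_i] = 1` forces the `ξ_i` at `ε = 1` to act as a regular sequence near
`ξ = 0`; since the cohomology of a Koszul complex is killed by the `ξ_i`, it vanishes there.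
-/

section TwistedOperators

variable {σ R S : Type*} [CommRing R] [CommRing S]

theorem pderiv_pderiv_comm (i j : σ) (p : MvPolynomial σ R) :
    pderiv i (pderiv j p) = pderiv j (pderiv i p) := by
  classical
  let D (k : σ) : Derivation R (MvPolynomial σ R) (MvPolynomial σ R) := pderiv k
  have commutator_eq_zero : ⁅D i, D j⁆ = 0 := by
    refine derivation_ext fun k => ?_
    simp only [D, Derivation.commutator_apply, pderiv_X, Pi.single_apply, Derivation.zero_apply]
    split_ifs <;> simp
  simpa [D, Derivation.commutator_apply, sub_eq_zero] using
    DFunLike.congr_fun commutator_eq_zero p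

/-- The operator `ξ_i = ε ∂_i + ∂_i f`. At `ε = 1` these are the components of the twisted de Rham
differential, at `ε = 0` those of the Koszul differential of `∇f`. -/
def twistedPDeriv (ε : R) (f : MvPolynomial σ R) (i : σ) : Module.End R (MvPolynomial σ R) :=
  ε • (pderiv i).toLinearMap + LinearMap.mulLeft R (pderiv i f)

theorem twistedPDeriv_apply (ε : R) (f : MvPolynomial σ R) (i : σ) (p : MvPolynomial σ R) :
    twistedPDeriv ε f i p = ε • pderiv i p + pderiv i f * p := by
  simp [twistedPDeriv]

theorem twistedPDeriv_mul (ε : R) (f : MvPolynomial σ R) (i : σ) (g p : MvPolynomial σ R) :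
    twistedPDeriv ε f i (g * p) = g * twistedPDeriv ε f i p + ε • (pderiv i g * p) := by
  simp only [twistedPDeriv_apply, Derivation.leibniz, smul_eq_mul, smul_eq_C_mul]
  ring

theorem twistedPDeriv_commute (ε : R) (f : MvPolynomial σ R) (i j : σ) :
    Commute (twistedPDeriv ε f i) (twistedPDeriv ε f j) := by
  refine LinearMap.ext fun p => ?_
  simp only [Module.End.mul_apply, twistedPDeriv_apply, map_add, Derivation.leibniz, smul_eq_mul,
    smul_eq_C_mul, derivation_C, pderiv_pderiv_comm i j]
  ring

theorem map_twistedPDeriv (φ : R →+* S) (ε : R) (f : MvPolynomial σ R) (i : σ)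
    (p : MvPolynomial σ R) :
    map φ (twistedPDeriv ε f i p) = twistedPDeriv (φ ε) (map φ f) i (map φ p) := by
  simp [twistedPDeriv_apply, pderiv_map, smul_eq_C_mul]

open scoped IsMulCommutative in
/-- The action of `R[ξ]` on `R[x]` in which the `i`-th variable acts as `ξ_i`. -/
def twistedAeval (ε : R) (f : MvPolynomial σ R) :
    MvPolynomial σ R →ₐ[R] Module.End R (MvPolynomial σ R) :=
  have := Algebra.isMulCommutative_adjoin R (s := Set.range (twistedPDeriv ε f)) (by
    rintro _ ⟨i, rfl⟩ _ ⟨j, rfl⟩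
    exact twistedPDeriv_commute ε f i j)
  (Algebra.adjoin R (Set.range (twistedPDeriv ε f))).val.comp
    (aeval fun i => (⟨twistedPDeriv ε f i, Algebra.subset_adjoin ⟨i, rfl⟩⟩ :
      Algebra.adjoin R (Set.range (twistedPDeriv ε f))))

@[simp]
theorem twistedAeval_X (ε : R) (f : MvPolynomial σ R) (i : σ) :
    twistedAeval ε f (X i) = twistedPDeriv ε f i := by
  simp only [twistedAeval, AlgHom.comp_apply, aeval_X]
  rfl

@[simp]
theorem twistedAeval_C_apply (ε : R) (f : MvPolynomial σ R) (c : R) (p : MvPolynomial σ R) :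
    twistedAeval ε f (C c) p = c • p :=
  LinearMap.congr_fun ((twistedAeval ε f).commutes c) p

theorem twistedAeval_mul_apply (ε : R) (f q r p : MvPolynomial σ R) :
    twistedAeval ε f (q * r) p = twistedAeval ε f q (twistedAeval ε f r p) :=
  LinearMap.congr_fun (map_mul (twistedAeval ε f) q r) p

theorem map_twistedAeval (φ : R →+* S) (ε : R) (f q p : MvPolynomial σ R) :
    map φ (twistedAeval ε f q p) = twistedAeval (φ ε) (map φ f) (map φ q) (map φ p) := by
  induction q using MvPolynomial.induction_on generalizing p with
  | C a => simp [smul_eq_C_mul]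
  | add q r hq hr => simp [hq, hr]
  | mul_X q i hq => simp [hq, map_twistedPDeriv]

theorem X_mul_twistedAeval (ε : R) (f : MvPolynomial σ R) (i : σ) (q p : MvPolynomial σ R) :
    X i * twistedAeval ε f q p =
      twistedAeval ε f q (X i * p) - ε • twistedAeval ε f (pderiv i q) p := by
  classical
  induction q using MvPolynomial.induction_on generalizing p with
  | C a => simp
  | add q r hq hr => simp only [map_add, LinearMap.add_apply, mul_add, hq, hr, smul_add]; ring
  | mul_X q j hq =>
    have pderiv_X_comm : pderiv i (X j : MvPolynomial σ R) = pderiv j (X i) := by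
      simp [pderiv_X, Pi.single_apply, eq_comm]
    have pderiv_X_eq_C : pderiv j (X i : MvPolynomial σ R) = C (if i = j then 1 else 0) := by
      rw [pderiv_X, Pi.single_apply]; split_ifs <;> simp
    simp only [twistedAeval_mul_apply, twistedAeval_X, hq, twistedPDeriv_mul, Derivation.leibniz,
      smul_eq_mul, map_add, LinearMap.add_apply, pderiv_X_comm, mul_comm (X j), map_smul,
      pderiv_X_eq_C, twistedAeval_C_apply, ← smul_eq_C_mul, smul_add]
    ring

theorem twistedAeval_zero_apply (f q p : MvPolynomial σ R) :
    twistedAeval 0 f q p = aeval (fun i => pderiv i f) q * p := by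
  induction q using MvPolynomial.induction_on generalizing p with
  | C a => simp [smul_eq_C_mul]
  | add q r hq hr => simp [hq, hr, add_mul]
  | mul_X q j hq => simp [hq, twistedPDeriv_apply, mul_assoc]

/-- Exponents `(α, β)` of the operators `ξ^α x^β`. -/
abbrev WeylExponent (σ : Type*) := (σ →₀ ℕ) × (σ →₀ ℕ)

/-- The polynomial `ξ^α x^β`, that is, `x^β` acted upon by the monomial `ξ^α`. -/
def twistedMonomial (ε : R) (f : MvPolynomial σ R) (γ : WeylExponent σ) : MvPolynomial σ R :=
  twistedAeval ε f (monomial γ.1 1) (monomial γ.2 1)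

theorem map_twistedMonomial (φ : R →+* S) (ε : R) (f : MvPolynomial σ R) (γ : WeylExponent σ) :
    map φ (twistedMonomial ε f γ) = twistedMonomial (φ ε) (map φ f) γ := by
  simp [twistedMonomial, map_twistedAeval]

theorem twistedMonomial_zero_left (ε : R) (f : MvPolynomial σ R) (β : σ →₀ ℕ) :
    twistedMonomial ε f (0, β) = monomial β 1 := by
  simp [twistedMonomial]

theorem twistedPDeriv_twistedMonomial (ε : R) (f : MvPolynomial σ R) (i : σ)
    (γ : WeylExponent σ) :
    twistedPDeriv ε f i (twistedMonomial ε f γ) =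
      twistedMonomial ε f (γ.1 + Finsupp.single i 1, γ.2) := by
  rw [twistedMonomial, twistedMonomial, ← twistedAeval_X, ← twistedAeval_mul_apply, mul_comm,
    monomial_add_single, pow_one]

theorem X_mul_twistedMonomial (ε : R) (f : MvPolynomial σ R) (i : σ) (γ : WeylExponent σ) :
    X i * twistedMonomial ε f γ = twistedMonomial ε f (γ.1, γ.2 + Finsupp.single i 1) -
      (ε * (γ.1 i : R)) • twistedMonomial ε f (γ.1 - Finsupp.single i 1, γ.2) := by
  have pderiv_eq : pderiv i (monomial γ.1 (1 : R)) =
      C (γ.1 i : R) * monomial (γ.1 - Finsupp.single i 1) 1 := by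
    rw [pderiv_monomial, C_mul_monomial, mul_comm]
  simp only [twistedMonomial]
  rw [X_mul_twistedAeval, pderiv_eq, twistedAeval_mul_apply, twistedAeval_C_apply, smul_smul,
    monomial_add_single, pow_one, mul_comm (X i)]

theorem twistedMonomial_zero (f : MvPolynomial σ R) (γ : WeylExponent σ) :
    twistedMonomial 0 f γ = (γ.1.prod fun i k => pderiv i f ^ k) * monomial γ.2 1 := by
  rw [twistedMonomial, twistedAeval_zero_apply, aeval_monomial, map_one, one_mul]

/-- The span of the `ξ^α x^β` with `(α, β) ∈ A`. -/
def twistedSpan (ε : R) (f : MvPolynomial σ R) (A : Set (WeylExponent σ)) :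
    Submodule R (MvPolynomial σ R) :=
  Submodule.span R (twistedMonomial ε f '' A)

theorem twistedMonomial_mem_twistedSpan (ε : R) (f : MvPolynomial σ R) {A : Set (WeylExponent σ)}
    {γ : WeylExponent σ} (hγ : γ ∈ A) : twistedMonomial ε f γ ∈ twistedSpan ε f A :=
  Submodule.subset_span ⟨γ, hγ, rfl⟩

theorem twistedSpan_mono (ε : R) (f : MvPolynomial σ R) {A B : Set (WeylExponent σ)}
    (h : A ⊆ B) : twistedSpan ε f A ≤ twistedSpan ε f B :=
  Submodule.span_mono (Set.image_mono h)

theorem twistedPDeriv_mem_twistedSpan (ε : R) (f : MvPolynomial σ R) (i : σ)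
    {A B : Set (WeylExponent σ)} (hAB : ∀ γ ∈ A, (γ.1 + Finsupp.single i 1, γ.2) ∈ B)
    {v : MvPolynomial σ R} (hv : v ∈ twistedSpan ε f A) :
    twistedPDeriv ε f i v ∈ twistedSpan ε f B := by
  suffices twistedSpan ε f A ≤ (twistedSpan ε f B).comap (twistedPDeriv ε f i) from this hv
  rw [twistedSpan, Submodule.span_le]
  rintro _ ⟨γ, hγ, rfl⟩
  simpa [twistedPDeriv_twistedMonomial] using twistedMonomial_mem_twistedSpan ε f (hAB γ hγ)

theorem X_mul_mem_twistedSpan (ε : R) (f : MvPolynomial σ R) (i : σ) {A B : Set (WeylExponent σ)}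
    (hx : ∀ γ ∈ A, (γ.1, γ.2 + Finsupp.single i 1) ∈ B)
    (hξ : ∀ γ ∈ A, (γ.1 - Finsupp.single i 1, γ.2) ∈ B)
    {v : MvPolynomial σ R} (hv : v ∈ twistedSpan ε f A) : X i * v ∈ twistedSpan ε f B := by
  suffices twistedSpan ε f A ≤ (twistedSpan ε f B).comap (LinearMap.mulLeft R (X i)) from this hv
  rw [twistedSpan, Submodule.span_le]
  rintro _ ⟨γ, hγ, rfl⟩
  simp only [SetLike.mem_coe, Submodule.mem_comap, LinearMap.mulLeft_apply, X_mul_twistedMonomial]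
  exact sub_mem (twistedMonomial_mem_twistedSpan ε f (hx γ hγ))
    (Submodule.smul_mem _ _ (twistedMonomial_mem_twistedSpan ε f (hξ γ hγ)))

theorem map_mem_twistedSpan (φ : R →+* S) (ε : R) (f : MvPolynomial σ R)
    {A : Set (WeylExponent σ)} {v : MvPolynomial σ R} (hv : v ∈ twistedSpan ε f A) :
    map φ v ∈ twistedSpan (φ ε) (map φ f) A := by
  induction hv using Submodule.span_induction with
  | mem x hx =>
    obtain ⟨γ, hγ, rfl⟩ := hx
    simpa [map_twistedMonomial] using twistedMonomial_mem_twistedSpan _ _ hγ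
  | zero => simp
  | add x y _ _ hx hy => simpa using add_mem hx hy
  | smul a x _ hx => simpa [smul_eq_C_mul] using Submodule.smul_mem _ (φ a) hx

/-- The exponents `(α, β)` with `|β| ≤ j`: they span the `j`-th step of the filtration. -/
def filtrationExponents (σ : Type*) (j : ℕ) : Set (WeylExponent σ) := {γ | γ.2.degree ≤ j}

/-- The exponents of the `j`-th filtration step that are negligible modulo the image of `ξ` and
lower steps. -/
def lowerExponents (σ : Type*) (j : ℕ) : Set (WeylExponent σ) :=
  {γ | γ.2.degree < j ∨ γ.1 ≠ 0 ∧ γ.2.degree ≤ j}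

theorem lowerExponents_subset_filtrationExponents (j : ℕ) :
    lowerExponents σ j ⊆ filtrationExponents σ j :=
  fun _ h => h.elim le_of_lt And.right

theorem X_mul_mem_twistedSpan_filtrationExponents (ε : R) (f : MvPolynomial σ R) (i : σ) (j : ℕ)
    {v : MvPolynomial σ R} (hv : v ∈ twistedSpan ε f (filtrationExponents σ j)) :
    X i * v ∈ twistedSpan ε f (filtrationExponents σ (j + 1)) := by
  refine X_mul_mem_twistedSpan ε f i (fun γ hγ => ?_) (fun γ hγ => ?_) hv <;>
    simp only [filtrationExponents, Set.mem_ofPred_eq, map_add, Finsupp.degree_single] at hγ ⊢ <;>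
    omega

theorem X_mul_mem_twistedSpan_lowerExponents (ε : R) (f : MvPolynomial σ R) (i : σ) (j : ℕ)
    {v : MvPolynomial σ R} (hv : v ∈ twistedSpan ε f (lowerExponents σ j)) :
    X i * v ∈ twistedSpan ε f (lowerExponents σ (j + 1)) := by
  refine X_mul_mem_twistedSpan ε f i (fun γ hγ => ?_) (fun γ hγ => .inl ?_) hv
  · exact hγ.imp (by simp) (by simp)
  · exact Nat.lt_succ_of_le (lowerExponents_subset_filtrationExponents (σ := σ) j hγ :)

end TwistedOperators

section MonomialOrder

theorem addSubmonoid_finsupp_eq_top {σ : Type*} {S : AddSubmonoid (σ →₀ ℕ)}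
    (hS : ∀ i, Finsupp.single i 1 ∈ S) : S = ⊤ := by
  refine (AddSubmonoid.eq_top_iff' S).2 fun a => ?_
  rw [← a.sum_single]
  refine sum_mem fun i _ => ?_
  simpa using S.nsmul_mem (hS i) (a i)

variable {σ : Type*}

/-- The key by which exponents `(α, β)` are compared: first `|β|`, then `β` and `α`
lexicographically. -/
def orderKey : WeylExponent σ →+ ℕ ×ₗ (Lex (σ →₀ ℕ) ×ₗ Lex (σ →₀ ℕ)) where
  toFun γ := toLex (γ.2.degree, toLex (toLex γ.2, toLex γ.1))
  map_zero' := by simp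
  map_add' γ δ := by simp; rfl

theorem orderKey_injective : Function.Injective (orderKey (σ := σ)) := by
  intro γ δ h
  simp only [orderKey, AddMonoidHom.coe_mk, ZeroHom.coe_mk, toLex_inj, Prod.mk.injEq] at h
  exact Prod.ext h.2.2 h.2.1

variable [LinearOrder σ]

theorem orderKey_add_lt_add_right {γ γ' : WeylExponent σ} (h : orderKey γ < orderKey γ')
    (δ : WeylExponent σ) : orderKey (γ + δ) < orderKey (γ' + δ) := by
  simpa only [map_add] using add_lt_add_left h (orderKey δ)

theorem orderKey_lt_of_degree_lt {γ γ' : WeylExponent σ} (h : γ.2.degree < γ'.2.degree) :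
    orderKey γ < orderKey γ' :=
  Prod.Lex.toLex_lt_toLex.2 (.inl h)

theorem degree_le_of_orderKey_le {γ γ' : WeylExponent σ} (h : orderKey γ ≤ orderKey γ') :
    γ.2.degree ≤ γ'.2.degree :=
  not_lt.1 fun hlt => (orderKey_lt_of_degree_lt hlt).not_ge h

variable {R : Type*} [CommRing R] {ε : R} {f : MvPolynomial σ R}

/-- An exponent `γ` is nonstandard if `ξ^α x^β` is a combination of smaller such polynomials. -/
def IsNonstandard (ε : R) (f : MvPolynomial σ R) (γ : WeylExponent σ) : Prop :=
  twistedMonomial ε f γ ∈ twistedSpan ε f {γ' | orderKey γ' < orderKey γ}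

namespace IsNonstandard

theorem add_single_left {γ : WeylExponent σ} (h : IsNonstandard ε f γ) (i : σ) :
    IsNonstandard ε f (γ + (Finsupp.single i 1, 0)) := by
  have add_eq (γ : WeylExponent σ) :
      γ + (Finsupp.single i 1, 0) = (γ.1 + Finsupp.single i 1, γ.2) := by ext <;> simp
  unfold IsNonstandard
  rw [add_eq, ← twistedPDeriv_twistedMonomial, ← add_eq]
  refine twistedPDeriv_mem_twistedSpan ε f i (fun γ' hγ' => ?_) h
  rw [← add_eq]
  exact orderKey_add_lt_add_right hγ' _

theorem add_single_right {γ : WeylExponent σ} (h : IsNonstandard ε f γ) (i : σ) :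
    IsNonstandard ε f (γ + (0, Finsupp.single i 1)) := by
  have add_eq (γ : WeylExponent σ) :
      γ + (0, Finsupp.single i 1) = (γ.1, γ.2 + Finsupp.single i 1) := by ext <;> simp
  have hX : X i * twistedMonomial ε f γ ∈ twistedSpan ε f
      {γ' | orderKey γ' < orderKey (γ + (0, Finsupp.single i 1))} := by
    refine X_mul_mem_twistedSpan ε f i (fun γ' hγ' => ?_) (fun γ' hγ' => ?_) h
    · rw [← add_eq]
      exact orderKey_add_lt_add_right hγ' _
    · have hlt : orderKey γ' < orderKey γ := hγ'
      have := degree_le_of_orderKey_le hlt.le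
      exact orderKey_lt_of_degree_lt (by simp; omega)
  have hlower : twistedMonomial ε f (γ.1 - Finsupp.single i 1, γ.2) ∈ twistedSpan ε f
      {γ' | orderKey γ' < orderKey (γ + (0, Finsupp.single i 1))} :=
    twistedMonomial_mem_twistedSpan ε f (orderKey_lt_of_degree_lt (by simp))
  have eq_add := eq_add_of_sub_eq (X_mul_twistedMonomial ε f i γ).symm
  rw [← add_eq] at eq_add
  rw [IsNonstandard, eq_add]
  exact add_mem hX (Submodule.smul_mem _ _ hlower)

end IsNonstandard

theorem IsNonstandard.add {γ : WeylExponent σ} (h : IsNonstandard ε f γ) (δ : WeylExponent σ) :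
    IsNonstandard ε f (γ + δ) := by
  let shifts : AddSubmonoid (WeylExponent σ) :=
    { carrier := {δ | ∀ γ, IsNonstandard ε f γ → IsNonstandard ε f (γ + δ)}
      zero_mem' := by simp
      add_mem' := fun ha hb γ hγ => by simpa only [add_assoc] using hb _ (ha γ hγ) }
  have hleft : shifts.comap (AddMonoidHom.inl _ _) = ⊤ :=
    addSubmonoid_finsupp_eq_top fun i _ hγ => hγ.add_single_left i
  have hright : shifts.comap (AddMonoidHom.inr _ _) = ⊤ :=
    addSubmonoid_finsupp_eq_top fun i _ hγ => hγ.add_single_right i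
  have hδ : (δ.1, 0) + (0, δ.2) ∈ shifts :=
    add_mem (hleft ▸ AddSubmonoid.mem_top δ.1 :) (hright ▸ AddSubmonoid.mem_top δ.2 :)
  simpa using hδ γ h

theorem IsNonstandard.of_le {γ γ' : WeylExponent σ} (h : IsNonstandard ε f γ) (hle : γ ≤ γ') :
    IsNonstandard ε f γ' :=
  add_tsub_cancel_of_le hle ▸ h.add (γ' - γ)

end MonomialOrder

section GroebnerSaturation

theorem exists_finite_minimal_subset {α : Type*} [PartialOrder α]
    [WellQuasiOrderedLE α] (S : Set α) :
    ∃ T : Set α, T.Finite ∧ T ⊆ S ∧ ∀ a ∈ S, ∃ t ∈ T, t ≤ a := by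
  refine ⟨{t | Minimal (· ∈ S) t},
    WellQuasiOrderedLE.finite_of_isAntichain (setOfPred_minimal_antichain _), fun t h => h.1,
    fun a ha => ?_⟩
  obtain ⟨t, hta, ht⟩ := exists_minimal_le_of_wellFoundedLT (· ∈ S) a ha
  exact ⟨t, ht, hta⟩

theorem mem_smul_span_image_of_basis {R M ι : Type*} [CommRing R] [AddCommGroup M] [Module R M]
    (b : Module.Basis ι R M) {I : Ideal R} {t : Set ι} {v : M}
    (hI : v ∈ I • (⊤ : Submodule R M)) (hv : v ∈ Submodule.span R (b '' t)) :
    v ∈ I • Submodule.span R (b '' t) := by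
  have repr_mem (i : ι) : b.repr v i ∈ I := by
    clear hv
    induction hI using Submodule.smul_induction_on' with
    | smul r hr m _ => simpa using I.mul_mem_right _ hr
    | add x _ y _ hx hy => simpa using I.add_mem hx hy
  rw [← b.linearCombination_repr v, Finsupp.linearCombination_apply]
  exact sum_mem fun i hi => Submodule.smul_mem_smul (repr_mem i)
    (Submodule.subset_span ⟨i, b.mem_span_image.1 hv hi, rfl⟩)

variable {σ : Type*} [LinearOrder σ] {Λ K : Type*} [CommRing Λ] [Field K] {φ : Λ →+* K}
  {ε : Λ} {f : MvPolynomial σ Λ}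

theorem linearIndepOn_twistedMonomial (hφ : Function.Injective φ) :
    LinearIndepOn Λ (twistedMonomial ε f) {γ | ¬ IsNonstandard (φ ε) (map φ f) γ} := by
  refine linearIndepOn_iff.2 fun c hc hsum => ?_
  by_contra hne
  obtain ⟨γ, hγ, hmax⟩ :=
    Finset.exists_max_image c.support orderKey (Finsupp.support_nonempty_iff.2 hne)
  have hlead : φ (c γ) ≠ 0 := (map_ne_zero_iff φ hφ).2 (Finsupp.mem_support_iff.1 hγ)
  have map_sum_eq : φ (c γ) • twistedMonomial (φ ε) (map φ f) γ +
      ∑ δ ∈ c.support.erase γ, φ (c δ) • twistedMonomial (φ ε) (map φ f) δ = 0 := by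
    rw [Finset.add_sum_erase _ (fun δ => φ (c δ) • twistedMonomial (φ ε) (map φ f) δ) hγ]
    simpa [Finsupp.linearCombination_apply, Finsupp.sum, smul_eq_C_mul, map_twistedMonomial]
      using congr(map φ $hsum)
  refine hc hγ ((Submodule.smul_mem_iff _ hlead).1 ?_)
  rw [eq_neg_of_add_eq_zero_left map_sum_eq]
  refine neg_mem (sum_mem fun δ hδ => Submodule.smul_mem _ _ ?_)
  obtain ⟨hδγ, hδ⟩ := Finset.mem_erase.1 hδ
  exact twistedMonomial_mem_twistedSpan _ _
    (lt_of_le_of_ne (hmax δ hδ) (orderKey_injective.ne hδγ))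

theorem twistedMonomial_mem_span_standard [Finite σ]
    (hφ : ∀ γ, IsNonstandard (φ ε) (map φ f) γ → IsNonstandard ε f γ) (γ : WeylExponent σ) :
    twistedMonomial ε f γ ∈
      twistedSpan ε f {γ' | ¬ IsNonstandard (φ ε) (map φ f) γ' ∧ orderKey γ' ≤ orderKey γ} := by
  induction h : orderKey γ using WellFoundedLT.induction generalizing γ with
  | ind k ih =>
    subst h
    by_cases hγ : IsNonstandard (φ ε) (map φ f) γ
    · refine Submodule.span_le.2 ?_ (hφ γ hγ)
      rintro _ ⟨γ', hγ', rfl⟩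
      refine twistedSpan_mono ε f ?_ (ih _ hγ' γ' rfl)
      exact fun δ hδ => ⟨hδ.1, hδ.2.trans (LT.lt.le hγ')⟩
    · exact twistedMonomial_mem_twistedSpan ε f ⟨hγ, le_rfl⟩

/-- The basis of `Λ[x]` formed by the polynomials `ξ^α x^β` with `(α, β)` standard over `K`. -/
def standardBasis [Finite σ] (hφ : Function.Injective φ)
    (hns : ∀ γ, IsNonstandard (φ ε) (map φ f) γ → IsNonstandard ε f γ) :
    Module.Basis {γ | ¬ IsNonstandard (φ ε) (map φ f) γ} Λ (MvPolynomial σ Λ) :=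
  .mk (v := fun γ => twistedMonomial ε f γ) (linearIndepOn_twistedMonomial hφ) (by
    rw [← (basisMonomials σ Λ).span_eq, Submodule.span_le]
    rintro _ ⟨β, rfl⟩
    rw [coe_basisMonomials, ← Set.image_eq_range]
    change monomial β 1 ∈ _
    rw [← twistedMonomial_zero_left ε f]
    exact twistedSpan_mono ε f (fun _ h => h.1) (twistedMonomial_mem_span_standard hns (0, β)))

theorem standardBasis_apply [Finite σ] (hφ : Function.Injective φ)
    (hns : ∀ γ, IsNonstandard (φ ε) (map φ f) γ → IsNonstandard ε f γ)
    (γ : {γ | ¬ IsNonstandard (φ ε) (map φ f) γ}) :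
    standardBasis hφ hns γ = twistedMonomial ε f γ :=
  Module.Basis.mk_apply ..

/-- Each filtration step is spanned by a part of the standard basis, and is therefore saturated. -/
theorem mem_smul_twistedSpan_filtrationExponents [Finite σ] (hφ : Function.Injective φ)
    (hns : ∀ γ, IsNonstandard (φ ε) (map φ f) γ → IsNonstandard ε f γ) {I : Ideal Λ} {N : ℕ}
    {v : MvPolynomial σ Λ} (hv : v ∈ twistedSpan ε f (filtrationExponents σ N))
    (hI : ∀ β, coeff β v ∈ I) : v ∈ I • twistedSpan ε f (filtrationExponents σ N) := by
  let b := standardBasis hφ hns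
  let t : Set {γ | ¬ IsNonstandard (φ ε) (map φ f) γ} := {γ | γ.1 ∈ filtrationExponents σ N}
  have image_eq : b '' t = twistedMonomial ε f ''
      {γ | ¬ IsNonstandard (φ ε) (map φ f) γ ∧ γ ∈ filtrationExponents σ N} := by
    ext p
    constructor
    · rintro ⟨γ, hγ, rfl⟩
      exact ⟨γ, ⟨γ.2, hγ⟩, (standardBasis_apply hφ hns γ).symm⟩
    · rintro ⟨γ, hγ, rfl⟩
      exact ⟨⟨γ, hγ.1⟩, hγ.2, standardBasis_apply hφ hns _⟩
  have hvt : v ∈ Submodule.span Λ (b '' t) := by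
    rw [image_eq]
    refine Submodule.span_le.2 ?_ hv
    rintro _ ⟨γ, hγ, rfl⟩
    refine twistedSpan_mono ε f ?_ (twistedMonomial_mem_span_standard hns γ)
    exact fun δ hδ => ⟨hδ.1, (degree_le_of_orderKey_le hδ.2).trans hγ⟩
  have hvI : v ∈ I • (⊤ : Submodule Λ (MvPolynomial σ Λ)) := by
    rw [v.as_sum]
    refine sum_mem fun β _ => ?_
    rw [← mul_one (coeff β v), ← smul_eq_mul, ← smul_monomial]
    exact Submodule.smul_mem_smul (hI β) trivial
  refine Submodule.smul_mono le_rfl ?_ (mem_smul_span_image_of_basis b hvI hvt)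
  rw [image_eq]
  exact twistedSpan_mono ε f fun _ h => h.2

end GroebnerSaturation

section FrobeniusIdentity

variable {R B : Type*} [CommRing R] [CommRing B] [Algebra R B]

theorem exists_pow_prime_mul_eq {A : Type*} [Ring A] {p : ℕ} (hp : p.Prime) (x a : A) : ∃ r,
    x ^ p * a = ((LinearMap.mulLeft ℤ x - LinearMap.mulRight ℤ x) ^ p) a + a * x ^ p + p • r := by
  have commute_mul : Commute (LinearMap.mulLeft ℤ x) (LinearMap.mulRight ℤ x) :=
    LinearMap.commute_mulLeft_right ..
  obtain ⟨r, hr⟩ := Commute.exists_add_pow_prime_eq hp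
    (commute_mul.sub_left (Commute.refl (LinearMap.mulRight ℤ x)))
  rw [sub_add_cancel, mul_assoc, mul_assoc, ← nsmul_eq_mul, LinearMap.pow_mulLeft,
    LinearMap.pow_mulRight] at hr
  exact ⟨_, by simpa using LinearMap.congr_fun hr a⟩

theorem derivation_add_mulLeft_pow_char_mul (p : ℕ) [Fact p.Prime] [CharP B p]
    (D : Derivation R B B) (g a b : B) :
    ((D.toLinearMap + LinearMap.mulLeft R g) ^ p) (a * b) =
      (D.toLinearMap ^ p) a * b + a * ((D.toLinearMap + LinearMap.mulLeft R g) ^ p) b := by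
  set ξ : Module.End R B := D.toLinearMap + LinearMap.mulLeft R g with hξ
  have ad_mulLeft (c : B) : (LinearMap.mulLeft ℤ ξ - LinearMap.mulRight ℤ ξ)
      (LinearMap.mulLeft R c) = LinearMap.mulLeft R (D c) := by
    ext u
    simp [hξ]
    ring
  have ad_pow_mulLeft (k : ℕ) : ((LinearMap.mulLeft ℤ ξ - LinearMap.mulRight ℤ ξ) ^ k)
      (LinearMap.mulLeft R a) = LinearMap.mulLeft R ((D.toLinearMap ^ k) a) := by
    induction k with
    | zero => rfl
    | succ k ih => rw [pow_succ', pow_succ', Module.End.mul_apply, ih, ad_mulLeft]; rfl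
  obtain ⟨r, hr⟩ := exists_pow_prime_mul_eq (Fact.out : p.Prime) ξ (LinearMap.mulLeft R a)
  rw [ad_pow_mulLeft] at hr
  simpa using LinearMap.congr_fun hr b

/-- The derivation of `B[T]` acting by `D` on coefficients. -/
def coeffDerivation (D : Derivation R B B) : Derivation R (Polynomial B) (Polynomial B) :=
  PolynomialModule.equivPolynomialSelf.compDer D.mapCoeffs

theorem coeff_coeffDerivation (D : Derivation R B B) (q : Polynomial B) (k : ℕ) :
    (coeffDerivation D q).coeff k = D (q.coeff k) := rfl

/-- The operator `e^{-Tf} D e^{Tf} = D + T D(f)` on `B[T]`. -/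
def exponentialTwist (D : Derivation R B B) (f : B) : Module.End R (Polynomial B) :=
  (coeffDerivation D).toLinearMap + LinearMap.mulLeft R (Polynomial.X * Polynomial.C (D f))

section ExponentialTwist

variable (D : Derivation R B B) (f : B)

theorem exponentialTwist_apply (q : Polynomial B) : exponentialTwist D f q =
    coeffDerivation D q + Polynomial.X * Polynomial.C (D f) * q := rfl

theorem coeff_zero_exponentialTwist (q : Polynomial B) :
    (exponentialTwist D f q).coeff 0 = D (q.coeff 0) := by
  simp [exponentialTwist_apply, coeff_coeffDerivation, mul_assoc]

theorem coeff_succ_exponentialTwist (q : Polynomial B) (k : ℕ) :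
    (exponentialTwist D f q).coeff (k + 1) = D (q.coeff (k + 1)) + D f * q.coeff k := by
  simp [exponentialTwist_apply, coeff_coeffDerivation, mul_assoc]

theorem eval_one_exponentialTwist (q : Polynomial B) : (exponentialTwist D f q).eval 1 =
    (D.toLinearMap + LinearMap.mulLeft R (D f)) (q.eval 1) := by
  have eval_coeffDerivation : (coeffDerivation D q).eval 1 = D (q.eval 1) := by
    rw [Polynomial.eval_eq_sum_range' (n := q.natDegree + 1), Polynomial.eval_eq_sum_range]
    · simp [coeff_coeffDerivation]
    · exact Nat.lt_succ_of_le (Polynomial.natDegree_le_iff_coeff_eq_zero.2 fun k hk => by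
        rw [coeff_coeffDerivation, Polynomial.coeff_eq_zero_of_natDegree_lt hk, map_zero])
  simp [exponentialTwist_apply, eval_coeffDerivation]

theorem commute_derivative_exponentialTwist :
    Commute ((Polynomial.derivative (R := B)).restrictScalars R +
      LinearMap.mulLeft R (Polynomial.C f)) (exponentialTwist D f) := by
  refine LinearMap.ext fun q => Polynomial.ext fun k => ?_
  cases k <;>
    simp only [Module.End.mul_apply, LinearMap.add_apply, LinearMap.restrictScalars_apply,
      LinearMap.mulLeft_apply, Polynomial.coeff_add, Polynomial.coeff_derivative,
      Polynomial.coeff_C_mul, coeff_zero_exponentialTwist, coeff_succ_exponentialTwist, map_add,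
      Derivation.leibniz, smul_eq_mul, Derivation.map_natCast, Derivation.map_one_eq_zero] <;>
    push_cast <;>
    ring

theorem exponentialTwist_pow_one (m : ℕ) :
    ((exponentialTwist D f ^ m) 1).natDegree ≤ m ∧
      ((exponentialTwist D f ^ m) 1).coeff m = D f ^ m ∧
      D (((exponentialTwist D f ^ m) 1).coeff 0) = 0 := by
  induction m with
  | zero => simp
  | succ m ih =>
    obtain ⟨hdeg, hlead, hconst⟩ := ih
    rw [pow_succ', Module.End.mul_apply]
    refine ⟨Polynomial.natDegree_le_iff_coeff_eq_zero.2 fun k hk => ?_, ?_, ?_⟩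
    · obtain ⟨k, rfl⟩ := Nat.exists_eq_succ_of_ne_zero (by omega : k ≠ 0)
      rw [coeff_succ_exponentialTwist, Polynomial.coeff_eq_zero_of_natDegree_lt (by omega),
        Polynomial.coeff_eq_zero_of_natDegree_lt (by omega), map_zero, mul_zero, add_zero]
    · rw [coeff_succ_exponentialTwist, Polynomial.coeff_eq_zero_of_natDegree_lt (by omega), hlead,
        map_zero, zero_add, pow_succ']
    · rw [coeff_zero_exponentialTwist, hconst, map_zero]

theorem eval_one_exponentialTwist_pow_one (m : ℕ) :
    ((exponentialTwist D f ^ m) 1).eval 1 =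
      ((D.toLinearMap + LinearMap.mulLeft R (D f)) ^ m) 1 := by
  induction m with
  | zero => simp
  | succ m ih =>
    rw [pow_succ', Module.End.mul_apply, eval_one_exponentialTwist, ih, pow_succ',
      Module.End.mul_apply]

theorem coeffDerivation_pow_apply (m : ℕ) (q : Polynomial B) (k : ℕ) :
    (((coeffDerivation D).toLinearMap ^ m) q).coeff k = (D.toLinearMap ^ m) (q.coeff k) := by
  induction m with
  | zero => rfl
  | succ m ih =>
    rw [pow_succ', Module.End.mul_apply, pow_succ', Module.End.mul_apply, ← ih]
    rfl

end ExponentialTwist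

/-- If `D^p = 0` then `(D + D f)^p = (D f)^p`: the polynomial `(D + T D f)^p 1` in `T` is killed by
`d/dT`, so only its extreme coefficients survive. -/
theorem derivation_add_mulLeft_pow_char (p : ℕ) [Fact p.Prime] [CharP B p] [NoZeroDivisors B]
    (D : Derivation R B B) (hD : D.toLinearMap ^ p = 0) (f : B) :
    (D.toLinearMap + LinearMap.mulLeft R (D f)) ^ p = LinearMap.mulLeft R (D f ^ p) := by
  have hp : p ≠ 0 := (Fact.out : p.Prime).ne_zero
  set h : Polynomial B := (exponentialTwist D f ^ p) 1 with hh
  obtain ⟨hdeg, hlead, -⟩ : h.natDegree ≤ p ∧ h.coeff p = D f ^ p ∧ _ :=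
    exponentialTwist_pow_one D f p
  have coeff_zero : h.coeff 0 = 0 := by
    obtain ⟨m, rfl⟩ := Nat.exists_eq_succ_of_ne_zero hp
    rw [hh, pow_succ', Module.End.mul_apply, coeff_zero_exponentialTwist,
      (exponentialTwist_pow_one D f m).2.2]
  have derivative_h : Polynomial.derivative h = 0 := by
    have pow_eq_zero : ((coeffDerivation D).toLinearMap ^ p) (Polynomial.C f) = 0 :=
      Polynomial.ext fun k => by rw [coeffDerivation_pow_apply, hD]; simp
    have pow_apply_C : (exponentialTwist D f ^ p) (Polynomial.C f) = Polynomial.C f * h := by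
      rw [hh, exponentialTwist, ← mul_one (Polynomial.C f), derivation_add_mulLeft_pow_char_mul,
        pow_eq_zero, zero_mul, zero_add, mul_one]
    have commute_eq := LinearMap.congr_fun
      ((commute_derivative_exponentialTwist D f).pow_right p) (1 : Polynomial B)
    simpa [pow_apply_C, ← hh] using commute_eq
  have eval_h : h.eval 1 = D f ^ p := by
    rw [Polynomial.eval_eq_sum_range' (Nat.lt_succ_of_le hdeg), Finset.sum_range_succ, hlead,
      Finset.sum_eq_zero, zero_add, one_pow, mul_one]
    intro k hk
    rcases Nat.eq_zero_or_pos k with rfl | hk0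
    · rw [coeff_zero, zero_mul]
    · rw [← Polynomial.expand_contract p derivative_h hp,
        Polynomial.coeff_expand hp.bot_lt, if_neg
          (Nat.not_dvd_of_pos_of_lt hk0 (Finset.mem_range.1 hk)), zero_mul]
  refine LinearMap.ext fun b => ?_
  rw [← mul_one b, derivation_add_mulLeft_pow_char_mul, hD,
    ← eval_one_exponentialTwist_pow_one, ← hh, eval_h]
  simp [mul_comm]

theorem pderiv_pow_char {σ : Type*} (p : ℕ) [Fact p.Prime] [CharP R p] (i : σ) :
    (pderiv (R := R) i).toLinearMap ^ p = 0 := by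
  classical
  have hp : 1 < p := (Fact.out : p.Prime).one_lt
  refine LinearMap.ext fun q => ?_
  have mul_eq (a b : MvPolynomial σ R) :=
    derivation_add_mulLeft_pow_char_mul p (pderiv (R := R) i) 0 a b
  have pow_add_one (k : ℕ) (q : MvPolynomial σ R) :
      ((pderiv (R := R) i).toLinearMap ^ (k + 1)) q =
        ((pderiv (R := R) i).toLinearMap ^ k) (pderiv i q) := by
    rw [pow_succ]
    rfl
  simp only [LinearMap.mulLeft_zero_eq_zero, add_zero] at mul_eq
  obtain ⟨k, rfl⟩ : ∃ k, p = k + 2 := ⟨p - 2, by omega⟩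
  induction q using MvPolynomial.induction_on with
  | C a => simp [pow_add_one]
  | add q r hq hr => simp [hq, hr]
  | mul_X q j hq =>
    rw [mul_eq, hq]
    have pow_X : ((pderiv (R := R) i).toLinearMap ^ (k + 1)) (pderiv i (X j)) = 0 := by
      rw [pow_add_one, pderiv_X, Pi.single_apply]
      split_ifs <;> simp
    rw [pow_add_one, pow_X]
    simp

theorem twistedAeval_pow_char (p : ℕ) [Fact p.Prime] {σ κ : Type*} [Field κ] [CharP κ p]
    (f q v : MvPolynomial σ κ) :
    twistedAeval 1 f (expand p q) v = aeval (fun i => pderiv i f ^ p) q * v := by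
  induction q using MvPolynomial.induction_on generalizing v with
  | C a => simp [smul_eq_C_mul]
  | add q r hq hr => simp [hq, hr, add_mul]
  | mul_X q i hq =>
    have pow_eq : twistedPDeriv 1 f i ^ p = LinearMap.mulLeft κ (pderiv i f ^ p) := by
      rw [twistedPDeriv, one_smul, derivation_add_mulLeft_pow_char p _ (pderiv_pow_char p i)]
    simp [hq, pow_eq, mul_assoc]

/-- The Frobenius identity which compares `ε = 0` with `ε = 1` in characteristic `p`. -/
theorem twistedMonomial_zero_pow_char (p : ℕ) [Fact p.Prime] {σ κ : Type*} [Field κ] [CharP κ p]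
    (f : MvPolynomial σ κ) (γ : WeylExponent σ) :
    twistedMonomial 0 f γ ^ p = twistedMonomial 1 f (p • γ) := by
  have hexpand : monomial (p • γ).1 (1 : κ) = expand p (monomial γ.1 1) := by simp
  rw [twistedMonomial_zero, twistedMonomial, hexpand, twistedAeval_pow_char, aeval_monomial,
    mul_pow, monomial_pow, one_pow, Finsupp.prod, ← Finset.prod_pow]
  simp only [pow_right_comm _ p, map_one, one_mul, Prod.smul_snd]
  rfl

end FrobeniusIdentity

section IntegerResidueFields

theorem isJacobsonRing_int : IsJacobsonRing ℤ := by
  refine isJacobsonRing_iff_prime_eq.2 fun P hP => ?_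
  by_cases hbot : P = ⊥
  · subst hbot
    refine le_antisymm (fun x hx => ?_) Ideal.le_jacobson
    have unit_sq := Int.isUnit_iff.1 (Ideal.mem_jacobson_bot.1 hx x)
    rw [Ideal.mem_bot]
    rcases unit_sq with h | h <;> nlinarith [mul_self_nonneg x]
  · have := IsPrime.to_maximal_ideal hbot
    exact Ideal.jacobson_eq_self_of_isMaximal

theorem isJacobsonRing_of_finiteType_int (A : Type*) [CommRing A] [Algebra.FiniteType ℤ A] :
    IsJacobsonRing A :=
  have := isJacobsonRing_int
  isJacobsonRing_of_finiteType (A := ℤ)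

theorem exists_charP_and_finite_of_surjective {A κ : Type*} [CommRing A] [Algebra ℤ A]
    [Algebra.FiniteType ℤ A] [Field κ] {π : A →+* κ} (hπ : Function.Surjective π) :
    (∃ p : ℕ, p.Prime ∧ CharP κ p) ∧ Finite κ := by
  have : Algebra.FiniteType ℤ κ := .of_surjective (AlgHom.mk π fun n => by simp) hπ
  have := isJacobsonRing_int
  have : Module.Finite ℤ κ := finite_of_finite_type_of_isJacobsonRing ℤ κ
  rcases CharP.exists' κ with _ | ⟨p, hp, hchar⟩
  · have algebraMap_injective : Function.Injective (algebraMap ℤ κ) := by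
      rw [algebraMap_int_eq]
      exact Int.cast_injective
    exact (Int.not_isField
      (isField_of_isIntegral_of_isField algebraMap_injective (Field.toIsField κ))).elim
  · let _ := ZMod.algebra κ p
    have : IsScalarTower ℤ (ZMod p) κ := IsScalarTower.of_algebraMap_eq' (RingHom.ext_int _ _)
    have : Module.Finite (ZMod p) κ := Module.Finite.of_restrictScalars_finite ℤ (ZMod p) κ
    exact ⟨⟨p, hp.out, hchar⟩, Module.finite_of_finite (ZMod p)⟩

end IntegerResidueFields

section LeadingIdeal

variable {σ Λ : Type*} [CommRing Λ]

theorem homogeneousComponent_X_mul (i : σ) (j : ℕ) (c : MvPolynomial σ Λ) :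
    homogeneousComponent (j + 1) (X i * c) = X i * homogeneousComponent j c := by
  classical
  ext d
  rw [coeff_homogeneousComponent, coeff_X_mul', coeff_X_mul', coeff_homogeneousComponent]
  by_cases hi : i ∈ d.support
  · have degree_eq : d.degree = (d - Finsupp.single i 1).degree + 1 := by
      have hle : Finsupp.single i 1 ≤ d :=
        Finsupp.single_le_iff.2 (Nat.one_le_iff_ne_zero.2 (Finsupp.mem_support_iff.1 hi))
      conv_lhs => rw [← tsub_add_cancel_of_le hle, map_add, Finsupp.degree_single]
    simp [hi, degree_eq]
  · simp [hi]

/-- The ideal of the polynomials whose homogeneous component of each degree `j` is negligible in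
the `j`-th step of the filtration at `ε = 1`. -/
def leadingIdeal (f : MvPolynomial σ Λ) : Ideal (MvPolynomial σ Λ) where
  carrier := {c | ∀ j, homogeneousComponent j c ∈ twistedSpan 1 f (lowerExponents σ j)}
  add_mem' ha hb j := by
    rw [map_add]
    exact add_mem (ha j) (hb j)
  zero_mem' j := by simp
  smul_mem' r c hc := by
    induction r using MvPolynomial.induction_on generalizing c with
    | C a =>
      intro j
      rw [smul_eq_mul, homogeneousComponent_C_mul, ← smul_eq_C_mul]
      exact Submodule.smul_mem _ _ (hc j)
    | add a b ha hb =>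
      intro j
      rw [add_smul, map_add]
      exact add_mem (ha c hc j) (hb c hc j)
    | mul_X a i ha =>
      rw [mul_smul]
      refine ha _ fun j => ?_
      cases j with
      | zero =>
        classical
        rw [smul_eq_mul, homogeneousComponent_zero, coeff_X_mul', if_neg (by simp), map_zero]
        exact zero_mem _
      | succ j =>
        rw [smul_eq_mul, homogeneousComponent_X_mul]
        exact X_mul_mem_twistedSpan_lowerExponents _ _ _ _ (hc j)

theorem mem_leadingIdeal_iff_of_isHomogeneous {f c : MvPolynomial σ Λ} {j : ℕ}
    (hc : c.IsHomogeneous j) :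
    c ∈ leadingIdeal f ↔ c ∈ twistedSpan 1 f (lowerExponents σ j) := by
  refine ⟨fun h => homogeneousComponent_eq_self hc ▸ h j, fun h k => ?_⟩
  rw [homogeneousComponent_of_mem hc]
  split_ifs with hk
  · exact hk ▸ h
  · exact zero_mem _

theorem exists_isHomogeneous_sub_mem_lowerExponents {ε : Λ} {f v : MvPolynomial σ Λ} {j : ℕ}
    (hv : v ∈ twistedSpan ε f (filtrationExponents σ j)) :
    ∃ w : MvPolynomial σ Λ, w.IsHomogeneous j ∧ v - w ∈ twistedSpan ε f (lowerExponents σ j) := by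
  have subset_union : filtrationExponents σ j ⊆
      lowerExponents σ j ∪ {γ | γ.1 = 0 ∧ γ.2.degree = j} := by
    intro γ (hγ : γ.2.degree ≤ j)
    by_cases hα : γ.1 = 0
    · exact hγ.lt_or_eq.imp .inl (.intro hα)
    · exact .inl (.inr ⟨hα, hγ⟩)
  have span_le : twistedSpan ε f {γ | γ.1 = 0 ∧ γ.2.degree = j} ≤ homogeneousSubmodule σ Λ j := by
    refine Submodule.span_le.2 ?_
    rintro _ ⟨⟨_, β⟩, ⟨rfl, hβ⟩, rfl⟩
    rw [twistedMonomial_zero_left]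
    exact isHomogeneous_monomial 1 hβ
  have hsup := twistedSpan_mono ε f subset_union hv
  rw [twistedSpan, Set.image_union, Submodule.span_union] at hsup
  obtain ⟨u, hu, w, hw, rfl⟩ := Submodule.mem_sup.1 hsup
  exact ⟨w, span_le hw, by rwa [add_sub_cancel_right]⟩

theorem exists_coeff_mem_isHomogeneous_sub_mem_lowerExponents {ε : Λ} {f v : MvPolynomial σ Λ}
    {j : ℕ} {I : Ideal Λ} (hv : v ∈ I • twistedSpan ε f (filtrationExponents σ j)) :
    ∃ w ∈ Ideal.map C I, w.IsHomogeneous j ∧ v - w ∈ twistedSpan ε f (lowerExponents σ j) := by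
  induction hv using Submodule.smul_induction_on' with
  | smul r hr u hu =>
    obtain ⟨w, hw, hsub⟩ := exists_isHomogeneous_sub_mem_lowerExponents hu
    refine ⟨r • w, ?_, (homogeneousSubmodule σ Λ j).smul_mem r hw, ?_⟩
    · rw [smul_eq_C_mul]
      exact Ideal.mul_mem_right _ _ (Ideal.mem_map_of_mem C hr)
    · rw [← smul_sub]
      exact Submodule.smul_mem _ _ hsub
  | add u _ v _ hu hv =>
    obtain ⟨w, hwI, hw, hsub⟩ := hu
    obtain ⟨w', hwI', hw', hsub'⟩ := hv
    exact ⟨w + w', add_mem hwI hwI', hw.add hw', by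
      simpa only [add_sub_add_comm] using add_mem hsub hsub'⟩

theorem nsmul_mem_lowerExponents {p j : ℕ} (hp : p ≠ 0) {γ : WeylExponent σ}
    (hγ : γ ∈ lowerExponents σ j) : p • γ ∈ lowerExponents σ (p * j) := by
  simp only [lowerExponents, Set.mem_ofPred_eq, Prod.smul_fst, Prod.smul_snd, map_nsmul,
    smul_eq_mul] at hγ ⊢
  exact hγ.imp (Nat.mul_lt_mul_of_pos_left · hp.bot_lt)
    (And.imp (smul_ne_zero hp) (Nat.mul_le_mul_left p))

theorem exists_lift_pow_char {κ : Type*} [Field κ] (ψ : Λ →+* κ) (p : ℕ) [Fact p.Prime]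
    [CharP κ p] {f v : MvPolynomial σ Λ} {A B : Set (WeylExponent σ)} (hAB : ∀ γ ∈ A, p • γ ∈ B)
    (hv : v ∈ twistedSpan 0 f A) : ∃ w ∈ twistedSpan 1 f B, map ψ w = map ψ v ^ p := by
  induction hv using Submodule.span_induction with
  | mem v hv =>
    obtain ⟨γ, hγ, rfl⟩ := hv
    refine ⟨_, twistedMonomial_mem_twistedSpan 1 f (hAB γ hγ), ?_⟩
    simp [map_twistedMonomial, twistedMonomial_zero_pow_char]
  | zero => exact ⟨0, zero_mem _, by simp [(Fact.out : p.Prime).ne_zero]⟩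
  | add u v _ _ hu hv =>
    obtain ⟨w, hw, hwu⟩ := hu
    obtain ⟨w', hw', hwv⟩ := hv
    exact ⟨w + w', add_mem hw hw', by rw [map_add, map_add, hwu, hwv, add_pow_char]⟩
  | smul a v _ hv =>
    obtain ⟨w, hw, hwv⟩ := hv
    exact ⟨a ^ p • w, Submodule.smul_mem _ _ hw, by simp [smul_eq_C_mul, hwv, mul_pow]⟩

end LeadingIdeal

section IntegralModel

variable {σ Λ K : Type*} [LinearOrder σ] [Finite σ] [CommRing Λ] [Algebra.FiniteType ℤ Λ]
  [Field K] {φ : Λ →+* K} {f : MvPolynomial σ Λ}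

theorem X_mem_of_leadingIdeal_le_of_isMaximal (hφ : Function.Injective φ)
    (hns : ∀ γ, IsNonstandard (φ 1) (map φ f) γ → IsNonstandard 1 f γ) {i : σ} {N : ℕ}
    (hX : X i ^ N ∈ twistedSpan 0 f (lowerExponents σ N)) {M : Ideal (MvPolynomial σ Λ)}
    (hM : M.IsMaximal) (hle : leadingIdeal f ≤ M) : X i ∈ M := by
  have : Algebra.FiniteType ℤ (MvPolynomial σ Λ) := .trans (S := Λ) inferInstance inferInstance
  let _ := Ideal.Quotient.field M
  let ψ : Λ →+* MvPolynomial σ Λ ⧸ M := (Ideal.Quotient.mk M).comp C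
  obtain ⟨⟨p, hp, _⟩, -⟩ :=
    exists_charP_and_finite_of_surjective (Ideal.Quotient.mk_surjective (I := M))
  have : Fact p.Prime := ⟨hp⟩
  obtain ⟨g, hg, hgX⟩ :=
    exists_lift_pow_char ψ p (fun _ => nsmul_mem_lowerExponents hp.ne_zero) hX
  have X_pow_mem : X i ^ (p * N) ∈ twistedSpan 1 f (filtrationExponents σ (p * N)) := by
    rw [X_pow_eq_monomial, ← twistedMonomial_zero_left 1 f]
    refine twistedMonomial_mem_twistedSpan _ _ ?_
    exact (Finsupp.degree_single i (p * N)).le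
  have sub_mem_smul : X i ^ (p * N) - g ∈
      RingHom.ker ψ • twistedSpan 1 f (filtrationExponents σ (p * N)) := by
    refine mem_smul_twistedSpan_filtrationExponents hφ hns (sub_mem X_pow_mem
      (twistedSpan_mono _ _ (lowerExponents_subset_filtrationExponents _) hg)) fun β => ?_
    have map_eq_zero : map ψ (X i ^ (p * N) - g) = 0 := by
      rw [map_sub, hgX, map_pow, map_pow, map_X, ← pow_mul, mul_comm, sub_self]
    rw [RingHom.mem_ker, ← coeff_map, map_eq_zero, coeff_zero]
  obtain ⟨w, hwI, hw, hsub⟩ := exists_coeff_mem_isHomogeneous_sub_mem_lowerExponents sub_mem_smul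
  have w_mem : w ∈ M := by
    refine (Ideal.map_le_iff_le_comap (K := M)).2 (fun a ha => ?_) hwI
    exact (Ideal.Quotient.eq_zero_iff_mem (I := M)).1 (RingHom.mem_ker.1 ha)
  have sub_mem : X i ^ (p * N) - w ∈ M := by
    refine hle ((mem_leadingIdeal_iff_of_isHomogeneous ((isHomogeneous_X_pow i _).sub hw)).2 ?_)
    rw [← sub_add_cancel (X i ^ (p * N) - w) g, sub_right_comm]
    exact add_mem hsub hg
  exact hM.isPrime.mem_of_pow_mem _ ((M.sub_mem_iff_left w_mem).1 sub_mem)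

theorem exists_X_pow_mem_lowerExponents_of_integral_model (hφ : Function.Injective φ)
    (hns : ∀ γ, IsNonstandard (φ 1) (map φ f) γ → IsNonstandard 1 f γ) {i : σ} {N : ℕ}
    (hX : X i ^ N ∈ twistedSpan 0 f (lowerExponents σ N)) :
    ∃ a, X i ^ a ∈ twistedSpan 1 f (lowerExponents σ a) := by
  have := isJacobsonRing_of_finiteType_int Λ
  obtain ⟨a, ha⟩ : X i ∈ (leadingIdeal f).radical := by
    rw [Ideal.radical_eq_jacobson, Ideal.jacobson, Submodule.mem_sInf]
    exact fun M hM => X_mem_of_leadingIdeal_le_of_isMaximal hφ hns hX hM.2 hM.1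
  exact ⟨a, (mem_leadingIdeal_iff_of_isHomogeneous (isHomogeneous_X_pow i a)).1 ha⟩

end IntegralModel

section Descent

variable {σ K : Type*} [Field K]

theorem exists_finset_mem_twistedSpan_of_subset {ε : K} {f v : MvPolynomial σ K}
    {A : Set (WeylExponent σ)} (hv : v ∈ twistedSpan ε f A) :
    ∃ T : Finset K, ∀ Λ : Subalgebra ℤ K, ↑T ⊆ (Λ : Set K) →
      ∀ (ε' : Λ) (f' v' : MvPolynomial σ Λ), (ε' : K) = ε → map (algebraMap Λ K) f' = f →
        map (algebraMap Λ K) v' = v → v' ∈ twistedSpan ε' f' A := by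
  classical
  obtain ⟨c, hcA, rfl⟩ := (Finsupp.mem_span_image_iff_linearCombination K).1 hv
  refine ⟨c.support.image c, fun Λ hT ε' f' v' hε hf hv' => ?_⟩
  have exists_coeff : ∀ γ ∈ c.support, ∃ a : Λ, (a : K) = c γ := fun γ hγ =>
    ⟨⟨c γ, hT (Finset.mem_coe.2 (Finset.mem_image_of_mem c hγ))⟩, rfl⟩
  choose! a ha using exists_coeff
  have v'_eq : v' = ∑ γ ∈ c.support, a γ • twistedMonomial ε' f' γ := by
    apply map_injective (algebraMap Λ K) Subtype.val_injective
    rw [hv', map_sum, Finsupp.linearCombination_apply, Finsupp.sum]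
    refine Finset.sum_congr rfl fun γ hγ => ?_
    rw [smul_eq_C_mul, smul_eq_C_mul, map_mul, map_C, map_twistedMonomial, hf, ← ha γ hγ, ← hε]
    rfl
  rw [v'_eq]
  exact sum_mem fun γ hγ =>
    Submodule.smul_mem _ _ (twistedMonomial_mem_twistedSpan _ _ (hcA hγ))

variable [LinearOrder σ] [Finite σ]

theorem exists_finset_isNonstandard_of_subset (ε : K) (f : MvPolynomial σ K) :
    ∃ T : Finset K, ∀ Λ : Subalgebra ℤ K, ↑T ⊆ (Λ : Set K) →
      ∀ (ε' : Λ) (f' : MvPolynomial σ Λ), (ε' : K) = ε → map (algebraMap Λ K) f' = f →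
        ∀ γ, IsNonstandard ε f γ → IsNonstandard ε' f' γ := by
  classical
  obtain ⟨S, hSfin, hSsub, hSmin⟩ := exists_finite_minimal_subset {γ | IsNonstandard ε f γ}
  choose! T hT using fun γ (hγ : γ ∈ S) => exists_finset_mem_twistedSpan_of_subset (hSsub hγ)
  refine ⟨hSfin.toFinset.biUnion T, fun Λ hΛ ε' f' hε hf γ hγ => ?_⟩
  obtain ⟨δ, hδ, hle⟩ := hSmin γ hγ
  refine IsNonstandard.of_le (hT δ hδ Λ (subset_trans ?_ hΛ) ε' f' _ hε hf ?_) hle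
  · exact Finset.coe_subset.2 (Finset.subset_biUnion_of_mem T (hSfin.mem_toFinset.2 hδ))
  · rw [map_twistedMonomial, hf, ← hε]
    rfl

theorem exists_X_pow_mem_lowerExponents_one {f : MvPolynomial σ K} {i : σ} {N : ℕ}
    (hX : X i ^ N ∈ twistedSpan 0 f (lowerExponents σ N)) :
    ∃ a, X i ^ a ∈ twistedSpan 1 f (lowerExponents σ a) := by
  classical
  obtain ⟨T, hT⟩ := exists_finset_mem_twistedSpan_of_subset hX
  obtain ⟨S, hS⟩ := exists_finset_isNonstandard_of_subset 1 f
  let G : Finset K := f.coeffs ∪ T ∪ S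
  let Λ := Algebra.adjoin ℤ (G : Set K)
  have : Algebra.FiniteType ℤ Λ := (Subalgebra.fg_iff_finiteType _).1 ⟨G, rfl⟩
  have subset : ∀ T' ⊆ G, (T' : Set K) ⊆ Λ := fun T' hT' =>
    (Finset.coe_subset.2 hT').trans Algebra.subset_adjoin
  obtain ⟨f', hf'⟩ : f ∈ Set.range (map (algebraMap Λ K)) := by
    refine mem_range_map_iff_coeffs_subset.2 ((subset f.coeffs ?_).trans_eq ?_)
    · exact Finset.subset_union_left.trans Finset.subset_union_left
    · exact Subtype.range_coe.symm
  have integral_X : X i ^ N ∈ twistedSpan 0 f' (lowerExponents σ N) :=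
    hT Λ (subset T (Finset.subset_union_right.trans Finset.subset_union_left)) 0 f' _ rfl hf'
      (by rw [map_pow, map_X])
  obtain ⟨a, ha⟩ := exists_X_pow_mem_lowerExponents_of_integral_model
    (φ := algebraMap Λ K) Subtype.val_injective (fun γ hγ => by
      rw [map_one, hf'] at hγ
      exact hS Λ (subset S Finset.subset_union_right) 1 f' rfl hf' γ hγ) integral_X
  refine ⟨a, ?_⟩
  simpa only [map_pow, map_X, map_one, hf'] using map_mem_twistedSpan (algebraMap Λ K) 1 f' ha

end Descent

section Characters

open Filter Topology

theorem exists_ringHom_comp_algebraMap_eq {P B k : Type*} [CommRing P] [CommRing B] [Algebra P B]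
    [Algebra.IsIntegral P B] [FaithfulSMul P B] [Field k] [IsAlgClosed k] (χ : P →+* k) :
    ∃ v : B →+* k, v.comp (algebraMap P B) = χ := by
  have : (RingHom.ker χ).IsPrime := RingHom.ker_isPrime χ
  obtain ⟨Q, -, hQ, hcomap⟩ := Ideal.exists_ideal_over_prime_of_isIntegral (S := B)
    (RingHom.ker χ) ⊥ (by simp [← RingHom.ker_eq_comap_bot, (RingHom.injective_iff_ker_eq_bot _).1
      (FaithfulSMul.algebraMap_injective P B)])
  have : Q.LiesOver (RingHom.ker χ) := ⟨hcomap.symm⟩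
  let _ : Algebra (P ⧸ RingHom.ker χ) k := (RingHom.kerLift χ).toAlgebra
  have : FaithfulSMul (P ⧸ RingHom.ker χ) k :=
    (faithfulSMul_iff_algebraMap_injective _ _).2 (RingHom.kerLift_injective χ)
  have : Module.IsTorsionFree (P ⧸ RingHom.ker χ) (B ⧸ Q) :=
    Module.isTorsionFree_iff_faithfulSMul.2 inferInstance
  let v : B ⧸ Q →ₐ[P ⧸ RingHom.ker χ] k := IsAlgClosed.lift
  refine ⟨v.toRingHom.comp (Ideal.Quotient.mk Q), RingHom.ext fun p => ?_⟩
  exact v.commutes (Ideal.Quotient.mk _ p)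

theorem exists_forall_eq_apply_smul (P : Type*) {B k : Type*} (G : Type*) [CommRing P] [CommRing B]
    [Algebra P B] [Group G] [Finite G] [MulSemiringAction G B] [SMulCommClass G P B]
    [Algebra.IsInvariant P B G] [Field k] {v v' : B →+* k}
    (heq : v'.comp (algebraMap P B) = v.comp (algebraMap P B))
    (hsurj : Function.Surjective (v.comp (algebraMap P B))) :
    ∃ g : G, ∀ b, v' b = v (g • b) := by
  have := RingHom.ker_isPrime v
  have := RingHom.ker_isPrime v'
  obtain ⟨g, hg⟩ := Algebra.IsInvariant.exists_smul_of_under_eq P B G (RingHom.ker v)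
    (RingHom.ker v') (by
      simpa only [Ideal.under, RingHom.comap_ker] using congrArg RingHom.ker heq.symm)
  refine ⟨g⁻¹, fun b => ?_⟩
  obtain ⟨p, hp⟩ := hsurj (v' b)
  have sub_mem : b - algebraMap P B p ∈ RingHom.ker v' := by
    rw [RingHom.mem_ker, map_sub, ← hp, sub_eq_zero, ← heq]
    rfl
  rw [hg, Ideal.mem_pointwise_smul_iff_inv_smul_mem, RingHom.mem_ker, smul_sub, map_sub,
    smul_algebraMap, sub_eq_zero] at sub_mem
  rw [sub_mem, ← hp]
  rfl

theorem norm_root_le_of_monic {k : Type*} [NormedField k] {q : Polynomial k} (hq : q.Monic)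
    {z : k} (hz : q.IsRoot z) : ‖z‖ ≤ ∑ i ∈ Finset.range q.natDegree, ‖q.coeff i‖ + 1 := by
  have cauchyBound_le :
      q.cauchyBound ≤ ∑ i ∈ Finset.range q.natDegree, ‖q.coeff i‖₊ + 1 := by
    rw [Polynomial.cauchyBound, hq.leadingCoeff, nnnorm_one, div_one]
    gcongr
    exact Finset.sup_le fun i hi =>
      Finset.single_le_sum (f := fun i => ‖q.coeff i‖₊) (fun _ _ => zero_le) hi
  simpa using NNReal.coe_le_coe.2 ((hz.norm_lt_cauchyBound hq.ne_zero).le.trans cauchyBound_le)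

theorem exists_tendsto_of_tendsto_comp_algebraMap {ι P B k : Type*} [CommRing P] [CommRing B]
    [Algebra P B] [Algebra.IsIntegral P B] [NormedField k] [ProperSpace k] (F : Ultrafilter ι)
    {χ : P →+* k} {v : ι → B →+* k}
    (hv : ∀ p, Tendsto (fun j => v j (algebraMap P B p)) F (𝓝 (χ p))) :
    ∃ v' : B →+* k, ∀ b, Tendsto (fun j => v j b) F (𝓝 (v' b)) := by
  have exists_limit : ∀ b, ∃ l, Tendsto (fun j => v j b) F (𝓝 l) := by
    intro b
    obtain ⟨q, hq, hqb⟩ := Algebra.IsIntegral.isIntegral (R := P) b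
    have norm_le : ∀ j, ‖v j b‖ ≤
        ∑ i ∈ Finset.range q.natDegree, ‖v j (algebraMap P B (q.coeff i))‖ + 1 := by
      intro j
      have hmonic : (q.map ((v j).comp (algebraMap P B))).Monic := hq.map _
      have hroot : (q.map ((v j).comp (algebraMap P B))).IsRoot (v j b) := by
        rw [Polynomial.IsRoot, Polynomial.eval_map, ← Polynomial.hom_eval₂, hqb, map_zero]
      simpa [hq.natDegree_map] using norm_root_le_of_monic hmonic hroot
    have tendsto_bound := (tendsto_finsetSum (Finset.range q.natDegree)
      fun i _ => (hv (q.coeff i)).norm).add_const 1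
    set M := ∑ i ∈ Finset.range q.natDegree, ‖χ (q.coeff i)‖ + 1
    have eventually_mem : ∀ᶠ j in F, v j b ∈ Metric.closedBall 0 (M + 1) := by
      filter_upwards [tendsto_bound.eventually (gt_mem_nhds (lt_add_one M))] with j hj
      exact mem_closedBall_zero_iff.2 ((norm_le j).trans hj.le)
    obtain ⟨l, -, hl⟩ := (isCompact_closedBall (0 : k) (M + 1)).ultrafilter_le_nhds
      (F.map fun j => v j b) (le_principal_iff.2 eventually_mem)
    exact ⟨l, hl⟩
  choose l hl using exists_limit
  refine ⟨.mk' (monoidHomOfTendsto l v (tendsto_pi_nhds.2 hl)) fun a b => ?_, hl⟩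
  refine tendsto_nhds_unique (hl (a + b)) ?_
  simp only [map_add]
  exact (hl a).add (hl b)

theorem dense_eval_ne_zero {σ k : Type*} [Finite σ] [NontriviallyNormedField k]
    {N : MvPolynomial σ k} (hN : N ≠ 0) : Dense {u : σ → k | eval u N ≠ 0} := by
  have := Fintype.ofFinite σ
  refine Metric.dense_iff.2 fun w r hr => ?_
  by_contra! hempty
  refine hN (MvPolynomial.funext_set (fun i => Metric.ball (w i) r)
    (fun i => infinite_of_mem_nhds (w i) (Metric.ball_mem_nhds _ hr)) fun u hu => ?_)
  by_contra hne
  have mem_ball : u ∈ Metric.ball w r := by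
    rw [ball_pi _ hr]
    exact hu
  exact (Set.eq_empty_iff_forall_notMem.1 hempty u) ⟨mem_ball, by simpa using hne⟩

end Characters

section Galois

attribute [local instance] FractionRing.liftAlgebra

universe u

theorem exists_isGalois_extension (K F : Type u) [Field K] [PerfectField K] [Field F] [Algebra K F]
    [FiniteDimensional K F] :
    ∃ (L : Type u) (_ : Field L) (_ : Algebra K L) (_ : F →ₐ[K] L),
      FiniteDimensional K L ∧ IsGalois K L :=
  ⟨IntermediateField.normalClosure K F (AlgebraicClosure F), inferInstance, inferInstance,
    IsScalarTower.toAlgHom K F _, inferInstance, {}⟩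

theorem exists_finite_invariant_extension (P A : Type u) [CommRing P] [IsDomain P]
    [IsIntegrallyClosed P] [CharZero P] [CommRing A] [IsDomain A] [Algebra P A]
    [FaithfulSMul P A] [Module.Finite P A] :
    ∃ (B : Type u) (_ : CommRing B) (_ : IsDomain B) (_ : Algebra P B) (ι : A →ₐ[P] B),
      Function.Injective ι ∧ Finite (B ≃ₐ[P] B) ∧ Algebra.IsIntegral P B ∧
        Algebra.IsInvariant P B (B ≃ₐ[P] B) := by
  let K := FractionRing P
  let F := FractionRing A
  have : CharZero K := charZero_of_injective_algebraMap (IsFractionRing.injective P K)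
  obtain ⟨L, _, _, j, _, _⟩ := exists_isGalois_extension K F
  let _ : Algebra P L := ((algebraMap K L).comp (algebraMap P K)).toAlgebra
  have : IsScalarTower P K L := .of_algebraMap_eq fun _ => rfl
  let B := integralClosure P L
  have : IsFractionRing B L := integralClosure.isFractionRing_of_finite_extension K L
  have : Algebra.IsInvariant P B (B ≃ₐ[P] B) := Algebra.isInvariant_of_isGalois' P K L B
  have : Finite (B ≃ₐ[P] B) := .of_equiv _ (galRestrict P K L B).toEquiv
  let ι : A →ₐ[P] L := (j.restrictScalars P).comp (IsScalarTower.toAlgHom P A F)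
  refine ⟨B, inferInstance, inferInstance, inferInstance,
    ι.codRestrict B fun a => (Algebra.IsIntegral.isIntegral a).map ι, ?_, ‹_›, inferInstance, ‹_›⟩
  have ι_injective : Function.Injective ι := j.injective.comp (IsFractionRing.injective A F)
  exact fun a b hab => ι_injective (congrArg Subtype.val hab)

end Galois

section Density

open Filter Topology

variable {σ A : Type} [Finite σ] [CommRing A] [IsDomain A]

theorem exists_tendsto_ringHom_apply_ne_zero [Algebra (MvPolynomial σ ℂ) A]
    [FaithfulSMul (MvPolynomial σ ℂ) A] [Module.Finite (MvPolynomial σ ℂ) A] {χ : A →+* ℂ}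
    {w : σ → ℂ} (hχ : χ.comp (algebraMap (MvPolynomial σ ℂ) A) = eval w) {g : A} (hg : g ≠ 0) :
    ∃ (v : ℕ → A →+* ℂ) (u : ℕ → σ → ℂ),
      (∀ k, (v k).comp (algebraMap (MvPolynomial σ ℂ) A) = eval (u k)) ∧
        (∀ a, Tendsto (fun k => v k a) (hyperfilter ℕ) (𝓝 (χ a))) ∧ ∀ k, v k g ≠ 0 := by
  let P := MvPolynomial σ ℂ
  obtain ⟨B, _, _, _, ι, hι, _, _, _⟩ := exists_finite_invariant_extension P A
  let _ : Algebra A B := ι.toRingHom.toAlgebra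
  have : IsScalarTower P A B := .of_algebraMap_eq fun p => (ι.commutes p).symm
  have : FaithfulSMul A B := (faithfulSMul_iff_algebraMap_injective A B).2 hι
  have : FaithfulSMul P B := .trans P A B
  have : Algebra.IsIntegral A B := .tower_top P
  obtain ⟨N, hN, c, hc⟩ := (Algebra.IsAlgebraic.isAlgebraic (R := P) g).exists_nonzero_dvd
    (mem_nonZeroDivisors_of_ne_zero hg)
  obtain ⟨u, hu, u_tendsto⟩ := mem_closure_iff_seq_limit.1 (dense_eval_ne_zero hN w)
  choose v hv using fun k => exists_ringHom_comp_algebraMap_eq (B := B) (eval (u k))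
  obtain ⟨χB, hχB⟩ := exists_ringHom_comp_algebraMap_eq (B := B) χ
  have tendsto_algebraMap (p : P) :
      Tendsto (fun k => v k (algebraMap P B p)) (hyperfilter ℕ) (𝓝 (eval w p)) := by
    refine Tendsto.congr (fun k => (RingHom.congr_fun (hv k) p).symm) ?_
    exact (((continuous_eval p).tendsto w).comp u_tendsto).mono_left Nat.hyperfilter_le_atTop
  obtain ⟨v', hv'⟩ := exists_tendsto_of_tendsto_comp_algebraMap _ tendsto_algebraMap
  have v'_comp : v'.comp (algebraMap P B) = eval w :=
    RingHom.ext fun p => tendsto_nhds_unique (hv' _) (tendsto_algebraMap p)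
  have χB_comp : χB.comp (algebraMap P B) = eval w := by
    rw [IsScalarTower.algebraMap_eq P A B, ← RingHom.comp_assoc, hχB, hχ]
  obtain ⟨γ, hγ⟩ := exists_forall_eq_apply_smul P (B ≃ₐ[P] B) (χB_comp.trans v'_comp.symm)
    fun z => ⟨C z, by rw [v'_comp, eval_C]⟩
  let γA : A →+* B := (γ : B →+* B).comp (algebraMap A B)
  have γA_comp (p : P) : γA (algebraMap P A p) = algebraMap P B p := by
    simp [γA, ← IsScalarTower.algebraMap_apply P A B]
  refine ⟨fun k => (v k).comp γA, u, fun k => ?_, fun a => ?_, fun k h0 => hu k ?_⟩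
  · rw [← hv k]
    exact RingHom.ext fun p => congrArg (v k) (γA_comp p)
  · rw [← hχB, RingHom.comp_apply, hγ]
    exact hv' _
  · rw [← hv k, RingHom.comp_apply, ← γA_comp, hc, map_mul, map_mul]
    exact mul_eq_zero_of_left h0 _

theorem exists_tendsto_algHom_apply_ne_zero [Algebra ℂ A] [Algebra.FiniteType ℂ A]
    (χ : A →ₐ[ℂ] ℂ) {g : A} (hg : g ≠ 0) :
    ∃ v : ℕ → A →ₐ[ℂ] ℂ,
      (∀ a, Tendsto (fun k => v k a) (hyperfilter ℕ) (𝓝 (χ a))) ∧ ∀ k, v k g ≠ 0 := by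
  obtain ⟨s, φ, hφ, hfin⟩ := exists_finite_inj_algHom_of_fg ℂ A
  let _ : Algebra (MvPolynomial (Fin s) ℂ) A := φ.toRingHom.toAlgebra
  have : FaithfulSMul (MvPolynomial (Fin s) ℂ) A :=
    (faithfulSMul_iff_algebraMap_injective _ A).2 hφ
  have : Module.Finite (MvPolynomial (Fin s) ℂ) A := hfin
  obtain ⟨v, u, hv, v_tendsto, hne⟩ := exists_tendsto_ringHom_apply_ne_zero (χ := χ.toRingHom)
    (w := fun i => χ (φ (X i)))
    (MvPolynomial.ringHom_ext (fun z => by simp [RingHom.algebraMap_toAlgebra])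
      fun i => by simp [RingHom.algebraMap_toAlgebra]) hg
  refine ⟨fun k => { v k with commutes' := fun z => ?_ }, v_tendsto, hne⟩
  have := RingHom.congr_fun (hv k) (C z)
  simpa [RingHom.algebraMap_toAlgebra] using this

end Density

section Tame

open Filter Topology

theorem exists_algHom_forall_mem_eq_zero {k A : Type*} [Field k] [IsAlgClosed k] [CommRing A]
    [Algebra k A] [Algebra.FiniteType k A] {I : Ideal A} (hI : I ≠ ⊤) :
    ∃ v : A →ₐ[k] k, ∀ a ∈ I, v a = 0 := by
  obtain ⟨M, hM, hIM⟩ := Ideal.exists_le_maximal I hI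
  have : Module.Finite k (A ⧸ M) := by
    let _ := Ideal.Quotient.field M
    exact finite_of_finite_type_of_isJacobsonRing k (A ⧸ M)
  let _ := Ideal.Quotient.field M
  refine ⟨(IsAlgClosed.lift (R := k) (S := A ⧸ M)).comp (Ideal.Quotient.mkₐ k M), fun a ha => ?_⟩
  rw [AlgHom.comp_apply, Ideal.Quotient.mkₐ_eq_mk, Ideal.Quotient.eq_zero_iff_mem.2 (hIM ha),
    map_zero]

section Chart

variable {σ K : Type*} [Field K]

theorem monomial_mem_twistedSpan_filtrationExponents (ε : K) (f : MvPolynomial σ K) {N : ℕ}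
    {β : σ →₀ ℕ} (hβ : β.degree ≤ N) :
    monomial β 1 ∈ twistedSpan ε f (filtrationExponents σ N) := by
  rw [← twistedMonomial_zero_left ε f]
  exact twistedMonomial_mem_twistedSpan ε f hβ

theorem X_pow_mem_twistedSpan_filtrationExponents (ε : K) (f : MvPolynomial σ K) (i : σ) (N : ℕ) :
    X i ^ N ∈ twistedSpan ε f (filtrationExponents σ N) := by
  rw [X_pow_eq_monomial]
  exact monomial_mem_twistedSpan_filtrationExponents ε f (by simp)

theorem mul_mem_twistedSpan_zero_filtrationExponents (f : MvPolynomial σ K) {j k : ℕ}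
    {p q : MvPolynomial σ K} (hp : p ∈ twistedSpan 0 f (filtrationExponents σ j))
    (hq : q ∈ twistedSpan 0 f (filtrationExponents σ k)) :
    p * q ∈ twistedSpan 0 f (filtrationExponents σ (j + k)) := by
  suffices twistedSpan 0 f (filtrationExponents σ j) * twistedSpan 0 f (filtrationExponents σ k) ≤
      twistedSpan 0 f (filtrationExponents σ (j + k)) from this (Submodule.mul_mem_mul hp hq)
  rw [twistedSpan, twistedSpan, Submodule.span_mul_span, Submodule.span_le]
  rintro _ ⟨_, ⟨γ, hγ, rfl⟩, _, ⟨γ', hγ', rfl⟩, rfl⟩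
  have mul_eq : twistedMonomial 0 f γ * twistedMonomial 0 f γ' = twistedMonomial 0 f (γ + γ') := by
    have monomial_add (α β : σ →₀ ℕ) :
        (monomial (α + β) 1 : MvPolynomial σ K) = monomial α 1 * monomial β 1 := by
      rw [monomial_mul, one_mul]
    simp only [twistedMonomial, Prod.fst_add, Prod.snd_add, monomial_add,
      map_mul, Module.End.mul_apply, twistedAeval_zero_apply]
    ring
  simp only [SetLike.mem_coe, mul_eq]
  refine twistedMonomial_mem_twistedSpan 0 f ?_
  simp only [filtrationExponents, Set.mem_ofPred_eq, Prod.snd_add, map_add] at hγ hγ' ⊢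
  lia

/-- The ring `K[x][1 / x_i]` of functions on the complement of the hyperplane `x_i = 0`. -/
abbrev AwayX (K : Type*) [Field K] {σ : Type*} (i : σ) :=
  Localization.Away (X i : MvPolynomial σ K)

/-- The algebra `K[1 / x_i, x_j / x_i, ∂_j f]`: the coordinate ring, in the chart at infinity given
by the `i`-th coordinate of projective space, of the closure of the graph of `∇f`. -/
def gradientChart (f : MvPolynomial σ K) (i : σ) : Subalgebra K (AwayX K i) :=
  Algebra.adjoin K ({IsLocalization.Away.invSelf (X i : MvPolynomial σ K)} ∪
    (Set.range (fun j => algebraMap (MvPolynomial σ K) _ (X j) *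
      IsLocalization.Away.invSelf (X i : MvPolynomial σ K)) ∪
      Set.range fun j => algebraMap (MvPolynomial σ K) _ (pderiv j f)))

namespace gradientChart

variable (f : MvPolynomial σ K) (i : σ)

/-- The function `1 / x_i` on the chart at infinity, whose zero locus is the hyperplane at
infinity. -/
def invX : gradientChart f i :=
  ⟨IsLocalization.Away.invSelf (X i : MvPolynomial σ K), Algebra.subset_adjoin (Or.inl rfl)⟩

/-- The partial derivative `∂_j f` as a function on the chart at infinity. -/
def gradient (j : σ) : gradientChart f i :=
  ⟨algebraMap (MvPolynomial σ K) _ (pderiv j f), Algebra.subset_adjoin (Or.inr (Or.inr ⟨j, rfl⟩))⟩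

instance [Finite σ] : Algebra.FiniteType K (gradientChart f i) :=
  (Subalgebra.fg_iff_finiteType _).1 <| Subalgebra.fg_def.2 ⟨_, (Set.finite_singleton _).union
    ((Set.finite_range _).union (Set.finite_range _)), rfl⟩

instance : IsDomain (AwayX K i) :=
  IsLocalization.isDomain_localization (powers_le_nonZeroDivisors_of_noZeroDivisors (X_ne_zero i))

theorem algebraMap_X_mul_invX :
    algebraMap (MvPolynomial σ K) (AwayX K i) (X i) * invX f i = 1 :=
  IsLocalization.Away.mul_invSelf _

theorem exists_invX_pow_mul_algebraMap_eq (p : MvPolynomial σ K) :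
    ∃ (N : ℕ) (a : gradientChart f i),
      (invX f i : AwayX K i) ^ N * algebraMap (MvPolynomial σ K) _ p = a := by
  induction p using MvPolynomial.induction_on with
  | C c => exact ⟨0, algebraMap K _ c, by rw [pow_zero, one_mul]; rfl⟩
  | add p q hp hq =>
    obtain ⟨N, a, ha⟩ := hp
    obtain ⟨M, c, hc⟩ := hq
    refine ⟨N + M, invX f i ^ M * a + invX f i ^ N * c, ?_⟩
    simp only [Subalgebra.coe_add, Subalgebra.coe_mul, Subalgebra.coe_pow, map_add, ← ha, ← hc]
    ring
  | mul_X p j hp =>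
    obtain ⟨N, a, ha⟩ := hp
    refine ⟨N + 1, a * ⟨_, Algebra.subset_adjoin (Or.inr (Or.inl ⟨j, rfl⟩))⟩, ?_⟩
    simp only [Subalgebra.coe_mul, map_mul, ← ha, invX]
    ring

instance : IsLocalization.Away (invX f i) (AwayX K i) := by
  have isUnit_invX : IsUnit (invX f i : AwayX K i) :=
    .of_mul_eq_one_right _ (algebraMap_X_mul_invX f i)
  refine (isLocalization_iff _ _).2 ⟨?_, fun b => ?_, fun h => ⟨1, ?_⟩⟩
  · rintro ⟨_, N, rfl⟩
    exact (isUnit_invX.pow N :)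
  · obtain ⟨M, p, hp⟩ := IsLocalization.Away.surj (X i : MvPolynomial σ K) b
    obtain ⟨N, a, ha⟩ := exists_invX_pow_mul_algebraMap_eq f i p
    refine ⟨(invX f i ^ M * a, ⟨invX f i ^ N, N, rfl⟩), ?_⟩
    calc b * (invX f i : AwayX K i) ^ N
        = b * (algebraMap _ _ (X i) * (invX f i : AwayX K i)) ^ M * (invX f i : AwayX K i) ^ N := by
          rw [algebraMap_X_mul_invX, one_pow, mul_one]
      _ = (invX f i : AwayX K i) ^ M * ((invX f i : AwayX K i) ^ N *
          (b * algebraMap _ _ (X i) ^ M)) := by ring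
      _ = (invX f i : AwayX K i) ^ M * a := by rw [hp, ha]
  · rw [Subtype.val_injective h]

theorem exists_eval_eq_gradient {v : gradientChart f i →ₐ[K] K} (hv : v (invX f i) ≠ 0) :
    ∃ x : σ → K, x i * v (invX f i) = 1 ∧ ∀ j, eval x (pderiv j f) = v (gradient f i j) := by
  let w : AwayX K i →+* K :=
    IsLocalization.Away.lift (invX f i) (g := v.toRingHom) (isUnit_iff_ne_zero.2 hv)
  have w_coe (a : gradientChart f i) : w a = v a := IsLocalization.Away.lift_eq _ _ a
  have w_algebraMap : w.comp (algebraMap (MvPolynomial σ K) _) =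
      eval fun j => w (algebraMap (MvPolynomial σ K) _ (X j)) :=
    MvPolynomial.ringHom_ext (fun c => by
      rw [eval_C]
      exact (w_coe (algebraMap K _ c)).trans (v.commutes c)) fun j => by simp
  refine ⟨fun j => w (algebraMap (MvPolynomial σ K) _ (X j)), ?_, fun j => ?_⟩
  · rw [← w_coe, ← map_mul, algebraMap_X_mul_invX, map_one]
  · rw [← w_algebraMap, ← w_coe]
    rfl

theorem exists_algebraMap_X_pow_mul_eq (a : gradientChart f i) :
    ∃ N, ∃ p ∈ twistedSpan 0 f (filtrationExponents σ N),
      algebraMap (MvPolynomial σ K) (AwayX K i) (X i) ^ N * a = algebraMap _ _ p := by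
  have one_mem (N : ℕ) : 1 ∈ twistedSpan 0 f (filtrationExponents σ N) := by
    simpa using monomial_mem_twistedSpan_filtrationExponents 0 f (β := 0) (N := N) (by simp)
  obtain ⟨a, ha⟩ := a
  change ∃ N, ∃ p ∈ twistedSpan 0 f (filtrationExponents σ N),
      algebraMap (MvPolynomial σ K) (AwayX K i) (X i) ^ N * a = algebraMap _ _ p
  induction ha using Algebra.adjoin_induction with
  | mem a ha =>
    rcases ha with rfl | ⟨j, rfl⟩ | ⟨j, rfl⟩
    · refine ⟨1, 1, one_mem 1, ?_⟩
      rw [pow_one, map_one, IsLocalization.Away.mul_invSelf]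
    · refine ⟨1, X j, by simpa using X_pow_mem_twistedSpan_filtrationExponents 0 f j 1, ?_⟩
      rw [pow_one, mul_left_comm, IsLocalization.Away.mul_invSelf, mul_one]
    · refine ⟨0, pderiv j f, ?_, by rw [pow_zero, one_mul]⟩
      have pderiv_mem := twistedPDeriv_mem_twistedSpan 0 f j (B := filtrationExponents σ 0)
        (fun γ (hγ : γ.2.degree ≤ 0) => hγ) (one_mem 0)
      simpa [twistedPDeriv_apply] using pderiv_mem
  | algebraMap c =>
    refine ⟨0, C c, ?_, ?_⟩
    · simpa [smul_eq_C_mul] using Submodule.smul_mem _ c (one_mem 0)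
    · rw [pow_zero, one_mul, ← algebraMap_eq, ← IsScalarTower.algebraMap_apply]
  | add a b _ _ ha hb =>
    obtain ⟨N, p, hp, hap⟩ := ha
    obtain ⟨M, q, hq, hbq⟩ := hb
    refine ⟨N + M, X i ^ M * p + X i ^ N * q, add_mem ?_ ?_, ?_⟩
    · rw [add_comm]
      exact mul_mem_twistedSpan_zero_filtrationExponents f
        (X_pow_mem_twistedSpan_filtrationExponents 0 f i M) hp
    · exact mul_mem_twistedSpan_zero_filtrationExponents f
        (X_pow_mem_twistedSpan_filtrationExponents 0 f i N) hq
    · simp only [map_add, map_mul, map_pow, ← hap, ← hbq]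
      ring
  | mul a b _ _ ha hb =>
    obtain ⟨N, p, hp, hap⟩ := ha
    obtain ⟨M, q, hq, hbq⟩ := hb
    refine ⟨N + M, p * q, mul_mem_twistedSpan_zero_filtrationExponents f hp hq, ?_⟩
    rw [map_mul, ← hap, ← hbq]
    ring

theorem exists_forall_algebraMap_X_pow_mul_eq (a : gradientChart f i) :
    ∃ N₀, ∀ N ≥ N₀, ∃ p ∈ twistedSpan 0 f (filtrationExponents σ N),
      algebraMap (MvPolynomial σ K) (AwayX K i) (X i) ^ N * a = algebraMap _ _ p := by
  obtain ⟨N₀, p, hp, hap⟩ := exists_algebraMap_X_pow_mul_eq f i a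
  refine ⟨N₀, fun N hN => ?_⟩
  induction N, hN using Nat.le_induction with
  | base => exact ⟨p, hp, hap⟩
  | succ N _ ih =>
    obtain ⟨q, hq, haq⟩ := ih
    refine ⟨X i * q, X_mul_mem_twistedSpan_filtrationExponents _ _ _ _ hq, ?_⟩
    rw [map_mul, ← haq, pow_succ']
    ring

theorem exists_X_pow_mem_lowerExponents_of_span_eq_top [Finite σ]
    (h : Ideal.span (insert (invX f i) (Set.range (gradient f i))) = ⊤) :
    ∃ N, X i ^ N ∈ twistedSpan 0 f (lowerExponents σ N) := by
  have := Fintype.ofFinite σ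
  have one_mem := (Ideal.eq_top_iff_one _).1 h
  obtain ⟨a, b, hb, hab⟩ := Ideal.mem_span_insert.1 one_mem
  obtain ⟨c, rfl⟩ := Ideal.mem_span_range_iff_exists_fun.1 hb
  obtain ⟨N₀, hN₀⟩ := exists_forall_algebraMap_X_pow_mul_eq f i a
  choose M hM using fun j => exists_forall_algebraMap_X_pow_mul_eq f i (c j)
  let N := N₀ + ∑ j, M j
  obtain ⟨p, hp, hap⟩ := hN₀ N (Nat.le_add_right _ _)
  choose q hq hcq using fun j => hM j (N + 1) <| by
    have := Finset.single_le_sum_of_canonicallyOrdered (f := M) (Finset.mem_univ j)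
    lia
  have X_pow_eq : X i ^ (N + 1) = p + ∑ j, twistedPDeriv 0 f j (q j) := by
    refine FaithfulSMul.algebraMap_injective (MvPolynomial σ K) (AwayX K i) ?_
    have coe_one_eq := congrArg (fun a : gradientChart f i => (a : AwayX K i)) hab
    simp only [Subalgebra.coe_add, Subalgebra.coe_mul, AddSubmonoidClass.coe_finsetSum,
      Subalgebra.coe_one] at coe_one_eq
    simp only [map_add, map_sum, map_pow, twistedPDeriv_apply, zero_smul, zero_add, map_mul, ← hap,
      ← hcq]
    calc algebraMap (MvPolynomial σ K) (AwayX K i) (X i) ^ (N + 1)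
        = algebraMap _ _ (X i) ^ (N + 1) *
            (a * (invX f i : AwayX K i) + ∑ j, (c j : AwayX K i) * gradient f i j) := by
          rw [← coe_one_eq, mul_one]
      _ = algebraMap _ _ (X i) ^ N * a * (algebraMap _ _ (X i) * (invX f i : AwayX K i)) +
            ∑ j, (gradient f i j : AwayX K i) * (algebraMap _ _ (X i) ^ (N + 1) * c j) := by
          rw [mul_add, Finset.mul_sum]
          congr 1
          · ring
          · exact Finset.sum_congr rfl fun j _ => by ring
      _ = _ := by rw [algebraMap_X_mul_invX, mul_one]; rfl
  refine ⟨N + 1, ?_⟩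
  rw [X_pow_eq]
  refine add_mem (twistedSpan_mono 0 f (fun γ hγ => .inl (Nat.lt_succ_of_le hγ)) hp)
    (sum_mem fun j _ => twistedPDeriv_mem_twistedSpan 0 f j (fun γ hγ => .inr ⟨?_, hγ⟩) (hq j))
  exact fun h => by simpa using DFunLike.congr_fun h j

end gradientChart

end Chart

/-- The gradient of `f` is bounded away from zero outside a compact set. -/
def IsTame {σ : Type*} [Fintype σ] (f : MvPolynomial σ ℂ) : Prop :=
  ∃ C δ : ℝ, 0 < C ∧ 0 < δ ∧ ∀ x : σ → ℂ, C ≤ √(∑ i, ‖x i‖ ^ 2) →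
    δ ≤ √(∑ i, ‖eval x (pderiv i f)‖ ^ 2)

namespace IsTame

variable {σ : Type} [Fintype σ] {f : MvPolynomial σ ℂ}

open gradientChart

theorem span_insert_invX_gradient_eq_top (hf : IsTame f) (i : σ) :
    Ideal.span (insert (invX f i) (Set.range (gradient f i))) = ⊤ := by
  by_contra hne
  obtain ⟨C, δ, -, hδ, norm_gradient_ge⟩ := hf
  obtain ⟨v₀, hv₀⟩ := exists_algHom_forall_mem_eq_zero (k := ℂ) hne
  obtain ⟨v, v_tendsto, v_invX_ne⟩ := exists_tendsto_algHom_apply_ne_zero v₀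
    (g := invX f i) fun h => one_ne_zero ((algebraMap_X_mul_invX f i).symm.trans (by simp [h]))
  choose x hx hxgrad using fun k => exists_eval_eq_gradient f i (v_invX_ne k)
  have invX_tendsto : Tendsto (fun k => v k (invX f i)) (hyperfilter ℕ) (𝓝 0) := by
    rw [← hv₀ (invX f i) (Ideal.subset_span (by simp))]
    exact v_tendsto _
  have gradient_tendsto (j : σ) :
      Tendsto (fun k => eval (x k) (pderiv j f)) (hyperfilter ℕ) (𝓝 0) := by
    rw [← hv₀ (gradient f i j) (Ideal.subset_span (by simp))]
    simpa only [hxgrad] using v_tendsto _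
  have norm_x_tendsto : Tendsto (fun k => ‖x k i‖) (hyperfilter ℕ) atTop := by
    have := tendsto_norm_inv_nhdsNE_zero_atTop.comp
      (tendsto_nhdsWithin_iff.2 ⟨invX_tendsto, .of_forall v_invX_ne⟩)
    exact this.congr fun k => congrArg norm (eq_inv_of_mul_eq_one_left (hx k)).symm
  have norm_gradient_tendsto : Tendsto (fun k => √(∑ j, ‖eval (x k) (pderiv j f)‖ ^ 2))
      (hyperfilter ℕ) (𝓝 0) := by
    simpa using (tendsto_finsetSum Finset.univ
      fun j _ => ((gradient_tendsto j).norm.pow 2)).sqrt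
  obtain ⟨k, hk, hk'⟩ := ((norm_x_tendsto.eventually_ge_atTop C).and
    (norm_gradient_tendsto.eventually_lt_const hδ)).exists
  refine hk'.not_ge (norm_gradient_ge (x k) (hk.trans (Real.le_sqrt_of_sq_le ?_)))
  exact Finset.single_le_sum (f := fun j => ‖x k j‖ ^ 2) (fun _ _ => sq_nonneg _)
    (Finset.mem_univ i)

theorem exists_X_pow_mem_lowerExponents_zero (hf : IsTame f) (i : σ) :
    ∃ N, X i ^ N ∈ twistedSpan 0 f (lowerExponents σ N) :=
  exists_X_pow_mem_lowerExponents_of_span_eq_top f i (hf.span_insert_invX_gradient_eq_top i)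

end IsTame

end Tame

section WeylPair

variable {R M : Type*} [CommRing R] [AddCommGroup M] [Module R M]

theorem pow_succ_mul_of_mul_sub_mul_eq_one {A : Type*} [Ring A] {a b : A} (h : a * b - b * a = 1)
    (m : ℕ) : b ^ (m + 1) * a = a * b ^ (m + 1) - (m + 1) • b ^ m := by
  have swap : b * a = a * b - 1 := by rw [← h]; abel
  induction m with
  | zero => simp [swap]
  | succ m ih =>
    rw [pow_succ', mul_assoc, ih, mul_sub, ← mul_assoc, swap, sub_mul, one_mul, mul_assoc,
      ← pow_succ', mul_smul_comm, ← pow_succ', succ_nsmul _ (m + 1)]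
    abel

theorem exists_pow_apply_pow_apply_eq {ξ x : Module.End R M} (h : ξ * x - x * ξ = 1) (u : M)
    (j : ℕ) : ∃ y, (x ^ j) ((ξ ^ j) u) = ξ y + ((-1) ^ j * (j.factorial : R)) • u := by
  induction j with
  | zero => exact ⟨0, by simp⟩
  | succ j ih =>
    obtain ⟨y, hy⟩ := ih
    refine ⟨(x ^ (j + 1)) ((ξ ^ j) u) - (j + 1) • y, ?_⟩
    have move : (x ^ (j + 1)) ((ξ ^ (j + 1)) u) =
        ξ ((x ^ (j + 1)) ((ξ ^ j) u)) - (j + 1) • (x ^ j) ((ξ ^ j) u) := by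
      rw [pow_succ' ξ, Module.End.mul_apply, ← Module.End.mul_apply (x ^ (j + 1)),
        pow_succ_mul_of_mul_sub_mul_eq_one h]
      rfl
    have factor : ((-1) ^ (j + 1) * ((j + 1).factorial : R)) • u =
        -((j + 1) • ((-1) ^ j * (j.factorial : R)) • u) := by
      rw [← Nat.cast_smul_eq_nsmul R, smul_smul, ← neg_smul, Nat.factorial_succ]
      push_cast
      ring_nf
    rw [move, hy, smul_add, factor, map_sub, map_nsmul]
    abel

theorem mem_range_of_pow_apply_eq_zero {ξ x : Module.End R M} (h : ξ * x - x * ξ = 1) {j : ℕ}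
    (hj : IsUnit (j.factorial : R)) {u : M} (hu : (ξ ^ j) u = 0) : u ∈ LinearMap.range ξ := by
  obtain ⟨y, hy⟩ := exists_pow_apply_pow_apply_eq h u j
  have isUnit_coeff : IsUnit ((-1) ^ j * (j.factorial : R)) := (isUnit_one.neg.pow j).mul hj
  rw [hu, map_zero] at hy
  rw [← Submodule.smul_mem_iff_of_isUnit _ isUnit_coeff, eq_neg_of_add_eq_zero_right hy.symm]
  exact neg_mem ⟨y, rfl⟩

theorem index_range_pow {ξ x : Module.End R M} (h : ξ * x - x * ξ = 1) {p : ℕ}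
    (hp : ∀ j < p, IsUnit (j.factorial : R)) :
    (LinearMap.range (ξ ^ p)).toAddSubgroup.index =
      (LinearMap.range ξ).toAddSubgroup.index ^ p := by
  induction p with
  | zero => simp [Module.End.one_eq_id]
  | succ j ih =>
    have ker_le : (ξ ^ j).toAddMonoidHom.ker ≤ (LinearMap.range ξ).toAddSubgroup :=
      fun u hu => mem_range_of_pow_apply_eq_zero h (hp j j.lt_succ_self) hu
    have map_range : (LinearMap.range ξ).toAddSubgroup.map (ξ ^ j).toAddMonoidHom =
        (LinearMap.range (ξ ^ (j + 1))).toAddSubgroup := by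
      rw [pow_succ, Module.End.mul_eq_comp, LinearMap.range_comp]
      rfl
    have index_map := AddSubgroup.index_map (LinearMap.range ξ).toAddSubgroup
      (ξ ^ j).toAddMonoidHom
    rw [sup_eq_left.2 ker_le, map_range] at index_map
    rw [index_map, pow_succ', ← ih fun i hi => hp i (hi.trans j.lt_succ_self)]
    rfl

theorem index_comap_mkQ (N : Submodule R M) (S : Submodule R (M ⧸ N)) :
    (S.comap N.mkQ).toAddSubgroup.index = S.toAddSubgroup.index :=
  AddSubgroup.index_comap_of_surjective S.toAddSubgroup (f := N.mkQ.toAddMonoidHom)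
    N.mkQ_surjective

theorem index_range_pow_sup {ξ x : Module.End R M} (h : ξ * x - x * ξ = 1) {p : ℕ}
    (hp : ∀ j < p, IsUnit (j.factorial : R)) {N : Submodule R M} (hξ : N ≤ N.comap ξ)
    (hx : N ≤ N.comap x) :
    (LinearMap.range (ξ ^ p) ⊔ N).toAddSubgroup.index =
      (LinearMap.range ξ ⊔ N).toAddSubgroup.index ^ p := by
  have commutator : N.mapQ N ξ hξ * N.mapQ N x hx - N.mapQ N x hx * N.mapQ N ξ hξ = 1 := by
    refine Submodule.linearMap_qext _ (LinearMap.ext fun v => ?_)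
    exact congrArg N.mkQ (LinearMap.congr_fun h v)
  have comap_range (m : ℕ) :
      (LinearMap.range (N.mapQ N ξ hξ ^ m)).comap N.mkQ = LinearMap.range (ξ ^ m) ⊔ N := by
    rw [← Submodule.mapQ_pow, Submodule.range_mapQ, Submodule.comap_map_mkQ, sup_comm]
  have index_eq (m : ℕ) : (LinearMap.range (ξ ^ m) ⊔ N).toAddSubgroup.index =
      (LinearMap.range (N.mapQ N ξ hξ ^ m)).toAddSubgroup.index := by
    rw [← comap_range, index_comap_mkQ]
  have index_one := index_eq 1
  rw [pow_one, pow_one] at index_one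
  rw [index_eq, index_one, index_range_pow commutator hp]

theorem iSup_range_le_comap {ι : Type*} {ξ : ι → Module.End R M} {g : Module.End R M}
    (hg : ∀ i, Commute g (ξ i)) :
    ⨆ i, LinearMap.range (ξ i) ≤ (⨆ i, LinearMap.range (ξ i)).comap g := by
  refine iSup_le fun i => ?_
  rintro _ ⟨w, rfl⟩
  exact Submodule.mem_iSup_of_mem i ⟨g w, (LinearMap.congr_fun (hg i).eq w).symm⟩

theorem index_iSup_range_pow {σ : Type*} [Fintype σ] {ξ x : σ → Module.End R M}
    (hξ : ∀ i j, Commute (ξ i) (ξ j)) (hξx : ∀ i, ξ i * x i - x i * ξ i = 1)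
    (hx : ∀ i j, i ≠ j → Commute (x i) (ξ j)) {p : ℕ}
    (hp : ∀ j < p, IsUnit (j.factorial : R)) :
    (⨆ i, LinearMap.range (ξ i ^ p)).toAddSubgroup.index =
      (⨆ i, LinearMap.range (ξ i)).toAddSubgroup.index ^ p ^ Fintype.card σ := by
  classical
  suffices index_eq : ∀ s : Finset σ,
      (⨆ i, LinearMap.range (ξ i ^ if i ∈ s then p else 1)).toAddSubgroup.index =
        (⨆ i, LinearMap.range (ξ i)).toAddSubgroup.index ^ p ^ s.card by
    simpa using index_eq Finset.univ
  intro s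
  induction s using Finset.induction_on with
  | empty => simp
  | insert a s ha ih =>
    have split (m : ℕ) (e : σ → ℕ) (he : e a = m) (hes : ∀ i ≠ a, e i = if i ∈ s then p else 1) :
        ⨆ i, LinearMap.range (ξ i ^ e i) = LinearMap.range (ξ a ^ m) ⊔
          ⨆ i : {i // i ≠ a}, LinearMap.range (ξ i ^ if (i : σ) ∈ s then p else 1) := by
      rw [iSup_split_single _ a, he, iSup_subtype]
      exact congrArg _ (iSup_congr fun i => iSup_congr fun hi => by rw [hes i hi])
    have index_insert := index_range_pow_sup (hξx a) hp
      (iSup_range_le_comap fun i : {i // i ≠ a} =>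
        (hξ a i).pow_right (if (i : σ) ∈ s then p else 1))
      (iSup_range_le_comap fun i : {i // i ≠ a} => (hx a i i.2.symm).pow_right _)
    rw [split p _ (by simp) fun i hi => by simp [hi], index_insert,
      Finset.card_insert_of_notMem ha, pow_succ, pow_mul, ← ih,
      split 1 _ (by simp [ha]) fun i _ => rfl, pow_one]

end WeylPair

section FrobeniusCount

variable {σ κ R : Type*} [Field κ] [CommRing R]

/-- The image `∑_i ξ_i R[x]`. -/
def twistedRange (ε : R) (f : MvPolynomial σ R) : Submodule R (MvPolynomial σ R) :=
  ⨆ i, LinearMap.range (twistedPDeriv ε f i)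

theorem twistedPDeriv_mem_twistedRange (ε : R) (f : MvPolynomial σ R) (i : σ)
    (v : MvPolynomial σ R) : twistedPDeriv ε f i v ∈ twistedRange ε f :=
  Submodule.mem_iSup_of_mem i ⟨v, rfl⟩

theorem mem_iSup_range_iff {ι M : Type*} [Fintype ι] [AddCommGroup M] [Module R M]
    {ξ : ι → Module.End R M} {v : M} :
    v ∈ ⨆ i, LinearMap.range (ξ i) ↔ ∃ q : ι → M, ∑ i, ξ i (q i) = v := by
  constructor
  · intro h
    rw [Submodule.mem_iSup_iff_exists_finsupp] at h
    obtain ⟨g, hg, rfl⟩ := h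
    choose q hq using hg
    exact ⟨q, by simp [hq, Finsupp.sum_fintype]⟩
  · rintro ⟨q, rfl⟩
    exact sum_mem fun i _ => Submodule.mem_iSup_of_mem i ⟨q i, rfl⟩

theorem twistedPDeriv_mul_mulLeft_X_sub (f : MvPolynomial σ R) (i : σ) :
    twistedPDeriv 1 f i * LinearMap.mulLeft R (X i) -
      LinearMap.mulLeft R (X i) * twistedPDeriv 1 f i = 1 :=
  LinearMap.ext fun v => by simp [twistedPDeriv_mul]

theorem commute_mulLeft_X_twistedPDeriv (ε : R) (f : MvPolynomial σ R) {i j : σ} (hij : i ≠ j) :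
    Commute (LinearMap.mulLeft R (X i)) (twistedPDeriv ε f j) :=
  LinearMap.ext fun v => by simp [twistedPDeriv_mul, pderiv_X_of_ne hij]

theorem isUnit_factorial_of_lt_char {p : ℕ} [CharP κ p] (hp : p.Prime) {j : ℕ} (hj : j < p) :
    IsUnit (j.factorial : κ) := by
  rw [isUnit_iff_ne_zero, Ne, CharP.cast_eq_zero_iff κ p, hp.dvd_factorial]
  exact hj.not_ge

/-- Division of exponents by `p`, into quotients and remainders. -/
def exponentDivMod (σ : Type*) [Finite σ] (p : ℕ) [NeZero p] :
    (σ →₀ ℕ) ≃ (σ →₀ ℕ) × (σ → Fin p) :=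
  Finsupp.equivFunOnFinite.trans <| (Equiv.piCongrRight fun _ => Nat.divModEquiv p).trans <|
    (Equiv.arrowProdEquivProdArrow _ _ _).trans <| Finsupp.equivFunOnFinite.symm.prodCongr (.refl _)

theorem exponentDivMod_symm_zero_add [Finite σ] (p : ℕ) [NeZero p] (α : σ →₀ ℕ) (β : σ → Fin p) :
    (exponentDivMod σ p).symm (0, β) + p • α = (exponentDivMod σ p).symm (α, β) := by
  ext i
  simp [exponentDivMod, mul_comm, add_comm]

open scoped Classical in
/-- The additive map `g ↦ ∑_β x^β g_β^p`, with `β` running over the exponents in `[0, p)^σ`. -/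
def frobeniusSum (σ κ : Type*) [Field κ] [Fintype σ] (p : ℕ) [Fact p.Prime] [CharP κ p] :
    ((σ → Fin p) → MvPolynomial σ κ) →+ MvPolynomial σ κ where
  toFun g := ∑ β, monomial ((exponentDivMod σ p).symm (0, β)) 1 * g β ^ p
  map_zero' := by simp [zero_pow (Fact.out : p.Prime).ne_zero]
  map_add' g h := by simp [add_pow_char, mul_add, Finset.sum_add_distrib]

variable (p : ℕ) [Fact p.Prime] [CharP κ p]

theorem twistedPDeriv_pow_char (f : MvPolynomial σ κ) (i : σ) (v : MvPolynomial σ κ) :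
    (twistedPDeriv 1 f i ^ p) v = pderiv i f ^ p * v := by
  simpa using twistedAeval_pow_char p f (X i) v

section Fintype

variable [Fintype σ]

theorem index_twistedRange_one_pow (f : MvPolynomial σ κ) :
    (⨆ i, LinearMap.range (twistedPDeriv 1 f i ^ p)).toAddSubgroup.index =
      (twistedRange 1 f).toAddSubgroup.index ^ p ^ Fintype.card σ :=
  index_iSup_range_pow (twistedPDeriv_commute 1 f) (twistedPDeriv_mul_mulLeft_X_sub f)
    (fun _ _ hij => commute_mulLeft_X_twistedPDeriv 1 f hij)
    fun _ hj => isUnit_factorial_of_lt_char Fact.out hj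

open scoped Classical in
theorem frobeniusSum_apply (g : (σ → Fin p) → MvPolynomial σ κ) :
    frobeniusSum σ κ p g = ∑ β, monomial ((exponentDivMod σ p).symm (0, β)) 1 * g β ^ p :=
  rfl

theorem frobeniusSum_single (β : σ → Fin p) (α : σ →₀ ℕ) (c : κ) :
    frobeniusSum σ κ p (Pi.single β (monomial α c)) =
      monomial ((exponentDivMod σ p).symm (α, β)) (c ^ p) := by
  classical
  rw [frobeniusSum_apply, Finset.sum_eq_single β]
  · rw [Pi.single_eq_same, monomial_pow, monomial_mul, exponentDivMod_symm_zero_add, one_mul]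
  · intro b _ hb
    rw [Pi.single_eq_of_ne hb, zero_pow (Fact.out : p.Prime).ne_zero, mul_zero]
  · simp

theorem coeff_frobeniusSum (β : σ → Fin p) (α : σ →₀ ℕ) (g : (σ → Fin p) → MvPolynomial σ κ) :
    coeff ((exponentDivMod σ p).symm (α, β)) (frobeniusSum σ κ p g) = coeff α (g β) ^ p := by
  classical
  let left : ((σ → Fin p) → MvPolynomial σ κ) →+ κ :=
    (lcoeff κ ((exponentDivMod σ p).symm (α, β))).toAddMonoidHom.comp (frobeniusSum σ κ p)
  let right : ((σ → Fin p) → MvPolynomial σ κ) →+ κ :=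
    ((frobenius κ p).toAddMonoidHom.comp (lcoeff κ α).toAddMonoidHom).comp
      (Pi.evalAddMonoidHom _ β)
  suffices left = right from DFunLike.congr_fun this g
  refine AddMonoidHom.functions_ext _ _ _ fun β' v => ?_
  induction v using MvPolynomial.induction_on' with
  | monomial α' c =>
    have hp := (Fact.out : p.Prime).ne_zero
    by_cases hβ : β' = β
    · subst hβ
      by_cases hα : α' = α <;>
        simp [left, right, frobeniusSum_single, coeff_monomial, hα, hp, frobenius_def]
    · simp [left, right, frobeniusSum_single, coeff_monomial, hβ, hp, frobenius_def]
  | add v w hv hw => rw [Pi.single_add, map_add, map_add, hv, hw]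

theorem frobeniusSum_bijective [PerfectRing κ p] :
    Function.Bijective (frobeniusSum σ κ p) := by
  classical
  refine ⟨(injective_iff_map_eq_zero _).2 fun g hg => ?_, fun v => ?_⟩
  · ext β α
    have := coeff_frobeniusSum p β α g
    rw [hg, coeff_zero, eq_comm, pow_eq_zero_iff (Fact.out : p.Prime).ne_zero] at this
    simpa using this
  · induction v using MvPolynomial.induction_on' with
    | monomial γ c =>
      refine ⟨Pi.single (exponentDivMod σ p γ).2
        (monomial (exponentDivMod σ p γ).1 ((frobeniusEquiv κ p).symm c)), ?_⟩
      rw [frobeniusSum_single, Prod.mk.eta, Equiv.symm_apply_apply, frobeniusEquiv_symm_pow_p]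
    | add v w hv hw =>
      obtain ⟨⟨g, rfl⟩, h, rfl⟩ := hv, hw
      exact ⟨g + h, map_add _ _ _⟩

theorem frobeniusSum_sum_mul (f : MvPolynomial σ κ)
    (q : σ → (σ → Fin p) → MvPolynomial σ κ) :
    frobeniusSum σ κ p (fun β => ∑ i, twistedPDeriv 0 f i (q i β)) =
      ∑ i, (twistedPDeriv 1 f i ^ p) (frobeniusSum σ κ p (q i)) := by
  classical
  simp only [frobeniusSum_apply, twistedPDeriv_pow_char, twistedPDeriv_apply, zero_smul, zero_add,
    sum_pow_char, Finset.mul_sum, mul_pow]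
  rw [Finset.sum_comm]
  exact Finset.sum_congr rfl fun i _ => Finset.sum_congr rfl fun β _ => by ring

theorem map_frobeniusSum_pi_twistedRange_zero [PerfectRing κ p] (f : MvPolynomial σ κ) :
    (AddSubgroup.pi Set.univ fun _ : σ → Fin p => (twistedRange 0 f).toAddSubgroup).map
        (frobeniusSum σ κ p) =
      (⨆ i, LinearMap.range (twistedPDeriv 1 f i ^ p)).toAddSubgroup := by
  ext v
  rw [Submodule.mem_toAddSubgroup, mem_iSup_range_iff, AddSubgroup.mem_map]
  constructor
  · rintro ⟨g, hg, rfl⟩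
    choose q hq using fun β => mem_iSup_range_iff.1 (hg β trivial)
    refine ⟨fun i => frobeniusSum σ κ p fun β => q β i, ?_⟩
    rw [← frobeniusSum_sum_mul, funext hq]
  · rintro ⟨w, rfl⟩
    choose q hq using fun i => (frobeniusSum_bijective (κ := κ) p).2 (w i)
    refine ⟨fun β => ∑ i, twistedPDeriv 0 f i (q i β), fun β _ => ?_, ?_⟩
    · exact sum_mem fun i _ => twistedPDeriv_mem_twistedRange 0 f i _
    · simp only [frobeniusSum_sum_mul, hq]

end Fintype

theorem index_twistedRange_one_eq_index_zero [Finite σ] [PerfectRing κ p]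
    (f : MvPolynomial σ κ) :
    (twistedRange 1 f).toAddSubgroup.index = (twistedRange 0 f).toAddSubgroup.index := by
  classical
  have := Fintype.ofFinite σ
  have pow_eq := AddSubgroup.index_map_of_bijective (frobeniusSum_bijective (κ := κ) p)
    (AddSubgroup.pi Set.univ fun _ : σ → Fin p => (twistedRange 0 f).toAddSubgroup)
  rw [map_frobeniusSum_pi_twistedRange_zero, index_twistedRange_one_pow, AddSubgroup.index_pi,
    Finset.prod_const, Finset.card_univ, Fintype.card_fun, Fintype.card_fin] at pow_eq
  exact Nat.pow_left_injective (pow_ne_zero _ (Fact.out : p.Prime).ne_zero) pow_eq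

end FrobeniusCount

section Specialization

variable {σ R S : Type*} [CommRing R] [CommRing S]

theorem twistedSpan_univ (ε : R) (f : MvPolynomial σ R) : twistedSpan ε f Set.univ = ⊤ := by
  refine top_unique fun v _ => ?_
  induction v using MvPolynomial.induction_on' with
  | monomial β c =>
    rw [← mul_one c, ← smul_eq_mul, ← smul_monomial, ← twistedMonomial_zero_left ε f]
    exact Submodule.smul_mem _ _ (twistedMonomial_mem_twistedSpan ε f trivial)
  | add v w hv hw => exact add_mem (hv trivial) (hw trivial)

theorem twistedRange_eq_twistedSpan (ε : R) (f : MvPolynomial σ R) :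
    twistedRange ε f = twistedSpan ε f {γ | γ.1 ≠ 0} := by
  refine le_antisymm (iSup_le fun i => ?_) (Submodule.span_le.2 ?_)
  · rintro _ ⟨v, rfl⟩
    have hv : v ∈ twistedSpan ε f Set.univ := by rw [twistedSpan_univ]; trivial
    exact twistedPDeriv_mem_twistedSpan ε f i (fun γ _ => by simp) hv
  · rintro _ ⟨γ, hγ, rfl⟩
    obtain ⟨i, hi⟩ := Finsupp.ne_iff.1 hγ
    have add_single : γ.1 - Finsupp.single i 1 + Finsupp.single i 1 = γ.1 :=
      tsub_add_cancel_of_le (Finsupp.single_le_iff.2 (Nat.one_le_iff_ne_zero.2 hi))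
    have := twistedPDeriv_mem_twistedRange ε f i
      (twistedMonomial ε f (γ.1 - Finsupp.single i 1, γ.2))
    rwa [twistedPDeriv_twistedMonomial, add_single] at this

theorem map_mem_twistedRange (φ : R →+* S) {ε : R} {f v : MvPolynomial σ R}
    (hv : v ∈ twistedRange ε f) : map φ v ∈ twistedRange (φ ε) (map φ f) := by
  rw [twistedRange_eq_twistedSpan] at hv ⊢
  exact map_mem_twistedSpan φ ε f hv

theorem exists_mem_twistedRange_map_eq {φ : R →+* S} (hφ : Function.Surjective φ) {ε : R}
    {f : MvPolynomial σ R} {v : MvPolynomial σ S} (hv : v ∈ twistedRange (φ ε) (map φ f)) :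
    ∃ w ∈ twistedRange ε f, map φ w = v := by
  induction hv using Submodule.iSup_induction' with
  | mem i v hv =>
    obtain ⟨w, rfl⟩ := hv
    obtain ⟨w, rfl⟩ := map_surjective φ hφ w
    exact ⟨_, twistedPDeriv_mem_twistedRange ε f i w, map_twistedPDeriv φ ε f i w⟩
  | zero => exact ⟨0, zero_mem _, map_zero _⟩
  | add v w _ _ hv hw =>
    obtain ⟨⟨v, hv, rfl⟩, w, hw, rfl⟩ := hv, hw
    exact ⟨v + w, add_mem hv hw, map_add _ _ _⟩

theorem map_smul_eq_smul_map (φ : R →+* S) (c : R) (v : MvPolynomial σ R) :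
    map φ (c • v) = φ c • map φ v := by
  simp [smul_eq_C_mul]

theorem map_mem_twistedRange_iff {ι : Type*} {φ : R →+* S} (hφ : Function.Surjective φ)
    {ε : R} {f : MvPolynomial σ R} (b : Module.Basis ι R (MvPolynomial σ R ⧸ twistedRange ε f))
    {v : MvPolynomial σ R} :
    map φ v ∈ twistedRange (φ ε) (map φ f) ↔
      ∀ j, φ (b.repr ((twistedRange ε f).mkQ v) j) = 0 := by
  constructor
  · intro hv j
    obtain ⟨w, hw, hwv⟩ := exists_mem_twistedRange_map_eq hφ hv
    have mkQ_eq : (twistedRange ε f).mkQ v = (twistedRange ε f).mkQ (v - w) := by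
      rw [map_sub, Submodule.mkQ_apply _ w, (Submodule.Quotient.mk_eq_zero _).2 hw, sub_zero]
    have coeff_eq_zero (β : σ →₀ ℕ) : φ (coeff β (v - w)) = 0 := by
      rw [← coeff_map, map_sub, hwv, sub_self, coeff_zero]
    rw [mkQ_eq, (v - w).as_sum]
    simp only [map_sum, Finsupp.finsetSum_apply]
    refine Finset.sum_eq_zero fun β _ => ?_
    rw [← mul_one (coeff β (v - w)), ← smul_eq_mul, ← smul_monomial, map_smul, map_smul,
      Finsupp.smul_apply, smul_eq_mul, map_mul, coeff_eq_zero, zero_mul]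
  · intro hv
    choose w hw using fun j => Submodule.mkQ_surjective _ (b j)
    have sub_mem : v - (b.repr ((twistedRange ε f).mkQ v)).sum (fun j c => c • w j) ∈
        twistedRange ε f := by
      rw [← Submodule.Quotient.eq, eq_comm]
      conv_rhs => rw [← Submodule.mkQ_apply, ← b.linearCombination_repr (Submodule.mkQ _ v)]
      rw [← Submodule.mkQ_apply, Finsupp.linearCombination_apply, map_finsuppSum]
      simp only [map_smul, hw]
    have := map_mem_twistedRange φ sub_mem
    rwa [map_sub, Finsupp.sum, map_sum, Finset.sum_eq_zero, sub_zero] at this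
    intro j _
    rw [map_smul_eq_smul_map, hv, zero_smul]

theorem linearIndependent_mkQ_of_map {ι : Type*} {φ : R →+* S} (hφ : Function.Injective φ)
    {ε : R} {f : MvPolynomial σ R} {v : ι → MvPolynomial σ R}
    (h : LinearIndependent S fun j => (twistedRange (φ ε) (map φ f)).mkQ (map φ (v j))) :
    LinearIndependent R fun j => (twistedRange ε f).mkQ (v j) := by
  rw [linearIndependent_iff'] at h ⊢
  intro s c hc j hj
  have sum_mem : ∑ j ∈ s, c j • v j ∈ twistedRange ε f := by
    rw [← Submodule.Quotient.mk_eq_zero, ← Submodule.mkQ_apply, map_sum, ← hc]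
    simp only [map_smul]
  have := map_mem_twistedRange φ sum_mem
  rw [map_sum, ← Submodule.Quotient.mk_eq_zero, ← Submodule.mkQ_apply, map_sum] at this
  simp only [map_smul_eq_smul_map, map_smul] at this
  exact hφ ((h s _ this j hj).trans (map_zero φ).symm)

theorem span_mkQ_monomial_eq_top_iff {ι : Type*} (ε : R) (f : MvPolynomial σ R)
    (e : ι → σ →₀ ℕ) :
    Submodule.span R (Set.range fun j => (twistedRange ε f).mkQ (monomial (e j) 1)) = ⊤ ↔
      twistedSpan ε f {γ | γ.1 ≠ 0 ∨ γ.2 ∈ Set.range e} = ⊤ := by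
  have sup_eq : twistedSpan ε f {γ | γ.1 ≠ 0 ∨ γ.2 ∈ Set.range e} =
      twistedRange ε f ⊔ Submodule.span R (Set.range fun j => monomial (e j) 1) := by
    refine le_antisymm (Submodule.span_le.2 ?_) (sup_le ?_ (Submodule.span_le.2 ?_))
    · rintro _ ⟨⟨α, β⟩, hγ, rfl⟩
      rcases eq_or_ne α 0 with rfl | hα
      · obtain ⟨j, rfl⟩ := hγ.resolve_left fun h => h rfl
        rw [twistedMonomial_zero_left]
        exact Submodule.mem_sup_right (Submodule.subset_span ⟨j, rfl⟩)
      · rw [twistedRange_eq_twistedSpan]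
        exact Submodule.mem_sup_left (twistedMonomial_mem_twistedSpan ε f hα)
    · rw [twistedRange_eq_twistedSpan]
      exact twistedSpan_mono ε f fun γ => Or.inl
    · rintro _ ⟨j, rfl⟩
      beta_reduce
      rw [SetLike.mem_coe, ← twistedMonomial_zero_left ε f (e j)]
      exact twistedMonomial_mem_twistedSpan ε f (Or.inr ⟨j, rfl⟩)
  rw [sup_eq, ← Submodule.map_mkQ_eq_top, Submodule.map_span, ← Set.range_comp]
  rfl

theorem index_twistedRange_map {ι : Type*} [Fintype ι] {φ : R →+* S}
    (hφ : Function.Surjective φ) {ε : R} {f : MvPolynomial σ R}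
    (b : Module.Basis ι R (MvPolynomial σ R ⧸ twistedRange ε f)) :
    (twistedRange (φ ε) (map φ f)).toAddSubgroup.index = Nat.card S ^ Fintype.card ι := by
  let coords : MvPolynomial σ R →+ (ι → S) :=
    (φ.toAddMonoidHom.compLeft ι).comp (b.equivFun.toLinearMap ∘ₗ Submodule.mkQ _).toAddMonoidHom
  have coords_surjective : Function.Surjective coords :=
    hφ.comp_left.comp (b.equivFun.surjective.comp (Submodule.mkQ_surjective _))
  have comap_eq : (twistedRange (φ ε) (map φ f)).toAddSubgroup.comap
      (map φ : MvPolynomial σ R →+* _).toAddMonoidHom = coords.ker := by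
    ext v
    exact (map_mem_twistedRange_iff hφ b).trans funext_iff.symm
  rw [← AddSubgroup.index_comap_of_surjective (f := (map φ : MvPolynomial σ R →+* _).toAddMonoidHom)
    _ (map_surjective φ hφ), comap_eq, AddSubgroup.index_ker,
    AddMonoidHom.range_eq_top.2 coords_surjective, AddSubgroup.card_top, Nat.card_fun,
    Fintype.card_eq_nat_card]

end Specialization

section QuotientBasis

variable {σ R K : Type*} [CommRing R] [Field K]

theorem monomial_mul_mem_twistedSpan_lowerExponents (ε : R) (f : MvPolynomial σ R)
    (β : σ →₀ ℕ) {j : ℕ} {v : MvPolynomial σ R} (hv : v ∈ twistedSpan ε f (lowerExponents σ j)) :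
    monomial β 1 * v ∈ twistedSpan ε f (lowerExponents σ (j + β.degree)) := by
  induction β using Finsupp.induction_linear generalizing j v with
  | zero => simpa using hv
  | add α β hα hβ =>
    have := hα (hβ hv)
    rwa [← mul_assoc, monomial_mul, one_mul, add_assoc, add_comm β.degree, ← map_add] at this
  | single i k =>
    rw [Finsupp.degree_single, ← X_pow_eq_monomial]
    induction k with
    | zero => simpa using hv
    | succ k ih =>
      rw [pow_succ', mul_assoc]
      exact X_mul_mem_twistedSpan_lowerExponents ε f i _ ih

theorem monomial_mem_twistedSpan_lowerExponents [Fintype σ] {ε : R} {f : MvPolynomial σ R}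
    {N : σ → ℕ} (hN : ∀ i, X i ^ N i ∈ twistedSpan ε f (lowerExponents σ (N i))) {β : σ →₀ ℕ}
    (hβ : ∑ i, N i < β.degree) : monomial β 1 ∈ twistedSpan ε f (lowerExponents σ β.degree) := by
  obtain ⟨i, hi⟩ : ∃ i, N i ≤ β i := by
    by_contra! h
    rw [Finsupp.degree_eq_sum] at hβ
    exact hβ.not_ge (Finset.sum_le_sum fun i _ => (h i).le)
  obtain ⟨α, rfl⟩ := exists_add_of_le (Finsupp.single_le_iff.2 hi)
  have := monomial_mul_mem_twistedSpan_lowerExponents ε f α (hN i)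
  have degree_eq : N i + α.degree = (Finsupp.single i (N i) + α).degree := by simp
  rwa [X_pow_eq_monomial, monomial_mul, mul_one, add_comm α, degree_eq] at this

theorem eq_top_of_twistedRange_le [Fintype σ] {ε : R} {f : MvPolynomial σ R} {N : σ → ℕ}
    (hN : ∀ i, X i ^ N i ∈ twistedSpan ε f (lowerExponents σ (N i)))
    {S : Submodule R (MvPolynomial σ R)} (hS : twistedRange ε f ≤ S)
    (hmonomial : ∀ β : σ →₀ ℕ, β.degree ≤ ∑ i, N i → monomial β 1 ∈ S) : S = ⊤ := by
  have monomial_mem (d : ℕ) : ∀ β : σ →₀ ℕ, β.degree = d → monomial β 1 ∈ S := by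
    induction d using Nat.strong_induction_on with
    | _ d ih =>
      rintro β rfl
      rcases le_or_gt β.degree (∑ i, N i) with hβ | hβ
      · exact hmonomial β hβ
      refine Submodule.span_le.2 ?_ (monomial_mem_twistedSpan_lowerExponents hN hβ)
      rintro _ ⟨⟨α, δ⟩, hγ, rfl⟩
      rcases eq_or_ne α 0 with rfl | hα
      · rw [SetLike.mem_coe, twistedMonomial_zero_left]
        exact ih _ (hγ.resolve_right fun h => h.1 rfl) δ rfl
      · rw [twistedRange_eq_twistedSpan] at hS
        exact hS (twistedMonomial_mem_twistedSpan ε f hα)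
  refine top_unique fun v _ => ?_
  rw [v.as_sum]
  refine sum_mem fun β _ => ?_
  rw [← mul_one (coeff β v), ← smul_eq_mul, ← smul_monomial]
  exact S.smul_mem _ (monomial_mem _ β rfl)

variable [Finite σ]

theorem exists_monomial_basis_quotient_twistedRange {ε : K} {f : MvPolynomial σ K}
    (hX : ∀ i, ∃ N, X i ^ N ∈ twistedSpan ε f (lowerExponents σ N)) :
    ∃ (r : ℕ) (e : Fin r → σ →₀ ℕ) (b : Module.Basis (Fin r) K
      (MvPolynomial σ K ⧸ twistedRange ε f)), ∀ j, b j = Submodule.mkQ _ (monomial (e j) 1) := by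
  have := Fintype.ofFinite σ
  choose N hN using hX
  have := (Finsupp.finite_of_degree_le (σ := σ) (∑ i, N i)).to_subtype
  let v (β : {β : σ →₀ ℕ | β.degree ≤ ∑ i, N i}) : MvPolynomial σ K ⧸ twistedRange ε f :=
    Submodule.mkQ _ (monomial β 1)
  obtain ⟨ι, a, ha, hspan, hli⟩ := exists_linearIndependent' K v
  have span_eq_top : Submodule.span K (Set.range v) = ⊤ := by
    rw [← (Submodule.comap_injective_of_surjective (Submodule.mkQ_surjective _)).eq_iff,
      Submodule.comap_top]
    refine eq_top_of_twistedRange_le hN ?_ fun β hβ => Submodule.subset_span ⟨⟨β, hβ⟩, rfl⟩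
    exact (Submodule.ker_mkQ _).ge.trans (LinearMap.ker_le_comap _)
  have := Finite.of_injective a ha
  have := Fintype.ofFinite ι
  let b := (Module.Basis.mk hli (hspan.trans span_eq_top).ge).reindex (Fintype.equivFin ι)
  exact ⟨_, fun j => a ((Fintype.equivFin ι).symm j), b, fun j => by simp [b, v]⟩

theorem exists_finset_basis_of_subset {ε : K} {f : MvPolynomial σ K}
    (hX : ∀ i, ∃ N, X i ^ N ∈ twistedSpan ε f (lowerExponents σ N)) {r : ℕ} {e : Fin r → σ →₀ ℕ}
    (b : Module.Basis (Fin r) K (MvPolynomial σ K ⧸ twistedRange ε f))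
    (hb : ∀ j, b j = Submodule.mkQ _ (monomial (e j) 1)) :
    ∃ T : Finset K, ∀ Λ : Subalgebra ℤ K, ↑T ⊆ (Λ : Set K) →
      ∀ (ε' : Λ) (f' : MvPolynomial σ Λ), (ε' : K) = ε → map (algebraMap Λ K) f' = f →
        Nonempty (Module.Basis (Fin r) Λ (MvPolynomial σ Λ ⧸ twistedRange ε' f')) := by
  classical
  have := Fintype.ofFinite σ
  choose N hN using hX
  have top := (span_mkQ_monomial_eq_top_iff ε f e).1 (by simp [← hb])
  choose TX hTX using fun i => exists_finset_mem_twistedSpan_of_subset (hN i)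
  choose TM hTM using fun β : σ →₀ ℕ => exists_finset_mem_twistedSpan_of_subset
    (top ▸ Submodule.mem_top (x := monomial β (1 : K)))
  let D := (Finsupp.finite_of_degree_le (σ := σ) (∑ i, N i)).toFinset
  refine ⟨Finset.univ.biUnion TX ∪ D.biUnion TM, fun Λ hΛ ε' f' hε' hf' => ?_⟩
  rw [Finset.coe_union, Set.union_subset_iff, Finset.coe_biUnion, Finset.coe_biUnion,
    Set.iUnion₂_subset_iff, Set.iUnion₂_subset_iff] at hΛ
  have hN' i : X i ^ N i ∈ twistedSpan ε' f' (lowerExponents σ (N i)) :=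
    hTX i Λ (hΛ.1 i (by simp)) ε' f' _ hε' hf' (by simp)
  have top' : twistedSpan ε' f' {γ | γ.1 ≠ 0 ∨ γ.2 ∈ Set.range e} = ⊤ := by
    refine eq_top_of_twistedRange_le hN' ?_ fun β hβ =>
      hTM β Λ (hΛ.2 β (by simpa [D] using hβ)) ε' f' _ hε' hf' (by simp)
    rw [twistedRange_eq_twistedSpan]
    exact twistedSpan_mono ε' f' fun γ => Or.inl
  have linearIndependent : LinearIndependent Λ fun j =>
      (twistedRange ε' f').mkQ (monomial (e j) 1) := by
    refine linearIndependent_mkQ_of_map (φ := algebraMap Λ K) Subtype.val_injective ?_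
    rw [show algebraMap Λ K ε' = ε from hε', hf']
    simp only [map_monomial, map_one, ← hb]
    exact b.linearIndependent
  exact ⟨.mk linearIndependent ((span_mkQ_monomial_eq_top_iff ε' f' e).2 top').ge⟩

theorem finite_quotient_twistedRange {ε : K} {f : MvPolynomial σ K}
    (hX : ∀ i, ∃ N, X i ^ N ∈ twistedSpan ε f (lowerExponents σ N)) :
    Module.Finite K (MvPolynomial σ K ⧸ twistedRange ε f) := by
  obtain ⟨_, _, b, -⟩ := exists_monomial_basis_quotient_twistedRange hX
  exact .of_basis b

theorem finrank_quotient_twistedRange_one_eq_finrank_zero {f : MvPolynomial σ K}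
    (hX₀ : ∀ i, ∃ N, X i ^ N ∈ twistedSpan 0 f (lowerExponents σ N))
    (hX₁ : ∀ i, ∃ N, X i ^ N ∈ twistedSpan 1 f (lowerExponents σ N)) :
    Module.finrank K (MvPolynomial σ K ⧸ twistedRange 1 f) =
      Module.finrank K (MvPolynomial σ K ⧸ twistedRange 0 f) := by
  classical
  obtain ⟨r₀, e₀, b₀, hb₀⟩ := exists_monomial_basis_quotient_twistedRange hX₀
  obtain ⟨r₁, e₁, b₁, hb₁⟩ := exists_monomial_basis_quotient_twistedRange hX₁
  obtain ⟨T₀, hT₀⟩ := exists_finset_basis_of_subset hX₀ b₀ hb₀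
  obtain ⟨T₁, hT₁⟩ := exists_finset_basis_of_subset hX₁ b₁ hb₁
  let G : Finset K := f.coeffs ∪ T₀ ∪ T₁
  let Λ := Algebra.adjoin ℤ (G : Set K)
  have : Algebra.FiniteType ℤ Λ := (Subalgebra.fg_iff_finiteType _).1 ⟨G, rfl⟩
  have subset (T : Finset K) (hT : T ⊆ G) : (T : Set K) ⊆ Λ :=
    (Finset.coe_subset.2 hT).trans Algebra.subset_adjoin
  obtain ⟨f', hf'⟩ : f ∈ Set.range (map (algebraMap Λ K)) := mem_range_map_iff_coeffs_subset.2
    ((subset f.coeffs (by grind)).trans_eq Subtype.range_coe.symm)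
  obtain ⟨b₀'⟩ := hT₀ Λ (subset T₀ (by grind)) 0 f' rfl hf'
  obtain ⟨b₁'⟩ := hT₁ Λ (subset T₁ (by grind)) 1 f' rfl hf'
  obtain ⟨M, hM⟩ := Ideal.exists_maximal Λ
  let _ := Ideal.Quotient.field M
  let π := Ideal.Quotient.mk M
  have hπ : Function.Surjective π := Ideal.Quotient.mk_surjective
  obtain ⟨⟨p, hp, _⟩, _⟩ := exists_charP_and_finite_of_surjective hπ
  have : Fact p.Prime := ⟨hp⟩
  have index_zero := index_twistedRange_map hπ b₀'
  have index_one := index_twistedRange_map hπ b₁'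
  rw [map_zero] at index_zero
  rw [map_one, index_twistedRange_one_eq_index_zero p, index_zero, Fintype.card_fin,
    Fintype.card_fin] at index_one
  rw [Module.finrank_eq_card_basis b₀, Module.finrank_eq_card_basis b₁, Fintype.card_fin,
    Fintype.card_fin]
  exact (Nat.pow_right_injective (Finite.one_lt_card (α := Λ ⧸ M)) index_one).symm

end QuotientBasis

section RegularNear

variable {ι S V : Type*} [CommRing S] [AddCommGroup V] [Module S V]

theorem mem_span_image_smul_top_iff {x : ι → S} {A : Finset ι} {v : V} :
    v ∈ Ideal.span (x '' A) • (⊤ : Submodule S V) ↔ ∃ w : ι → V, ∑ i ∈ A, x i • w i = v := by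
  constructor
  · classical
    let L : (ι → V) →ₗ[S] V := ∑ i ∈ A, x i • LinearMap.proj i
    have le_range : Ideal.span (x '' A) • (⊤ : Submodule S V) ≤ LinearMap.range L := by
      rw [Submodule.span_smul_eq]
      refine Submodule.set_smul_le _ _ _ ?_
      rintro _ v ⟨i, hi, rfl⟩ -
      refine ⟨Pi.single i v, ?_⟩
      simp only [L, LinearMap.sum_apply, LinearMap.smul_apply, LinearMap.proj_apply]
      rw [Finset.sum_eq_single_of_mem i hi fun j _ hji => by
        rw [Pi.single_eq_of_ne hji, smul_zero], Pi.single_eq_same]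
    intro hv
    obtain ⟨w, hw⟩ := le_range hv
    exact ⟨w, by simpa [L] using hw⟩
  · rintro ⟨w, rfl⟩
    exact sum_mem fun i hi =>
      Submodule.smul_mem_smul (Ideal.subset_span ⟨i, hi, rfl⟩) Submodule.mem_top

theorem mul_sub_one_mem {I : Ideal S} {a b : S} (ha : a - 1 ∈ I) (hb : b - 1 ∈ I) :
    a * b - 1 ∈ I := by
  rw [show a * b - 1 = a * (b - 1) + (a - 1) by ring]
  exact add_mem (I.mul_mem_left a hb) ha

/-- The elements `x i`, in any order, form a regular sequence on the localization of `V` at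
`1 + I`, except that the quotients by initial segments may vanish. -/
def IsRegularNear (I : Ideal S) (V : Type*) [AddCommGroup V] [Module S V] (x : ι → S) : Prop :=
  ∀ (A : Finset ι) (i : ι), i ∉ A → ∀ v : V,
    x i • v ∈ Ideal.span (x '' A) • (⊤ : Submodule S V) →
      ∃ h : S, h - 1 ∈ I ∧ h • v ∈ Ideal.span (x '' A) • (⊤ : Submodule S V)

end RegularNear

section Koszul

variable {ι S V : Type*} [LinearOrder ι] [CommRing S] [AddCommGroup V] [Module S V]

/-- The sign with which `dx_i ∧ dx_{s \ i}` equals `dx_s`. -/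
def koszulSign (S : Type*) [CommRing S] (s : Finset ι) (i : ι) : S :=
  (-1) ^ (s.filter (· < i)).card

theorem koszulSign_mul_self (s : Finset ι) (i : ι) : koszulSign S s i * koszulSign S s i = 1 := by
  rw [koszulSign, ← mul_pow]
  simp

theorem koszulSign_erase_self (s : Finset ι) (i : ι) :
    koszulSign S (s.erase i) i = koszulSign S s i := by
  rw [koszulSign, koszulSign, Finset.filter_erase, Finset.erase_eq_of_notMem (by simp)]

theorem koszulSign_insert_self (s : Finset ι) (i : ι) :
    koszulSign S (insert i s) i = koszulSign S s i := by
  rw [koszulSign, koszulSign, Finset.filter_insert, if_neg (lt_irrefl i)]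

theorem koszulSign_insert_of_lt (s : Finset ι) {i j : ι} (h : j < i) :
    koszulSign S (insert i s) j = koszulSign S s j := by
  rw [koszulSign, koszulSign, Finset.filter_insert, if_neg h.not_gt]

theorem koszulSign_insert_of_gt {s : Finset ι} {i j : ι} (h : i < j) (hi : i ∉ s) :
    koszulSign S (insert i s) j = -koszulSign S s j := by
  rw [koszulSign, koszulSign, Finset.filter_insert, if_pos h,
    Finset.card_insert_of_notMem (by simp [hi]), pow_succ, mul_neg_one]

theorem koszulSign_erase_add_koszulSign_insert {s : Finset ι} {i j : ι} (hi : i ∈ s)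
    (hj : j ∉ s) :
    koszulSign S s i * koszulSign S (s.erase i) j +
      koszulSign S s j * koszulSign S (insert j s) i = 0 := by
  obtain ⟨t, hit, rfl⟩ : ∃ t, i ∉ t ∧ insert i t = s :=
    ⟨s.erase i, Finset.notMem_erase i s, Finset.insert_erase hi⟩
  rw [Finset.erase_insert hit]
  rcases lt_or_gt_of_ne (show j ≠ i by rintro rfl; exact hj hi) with h | h
  · rw [koszulSign_insert_of_gt h hj, koszulSign_insert_of_lt t h]
    ring
  · rw [koszulSign_insert_of_lt _ h, koszulSign_insert_of_gt h hit]
    ring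

/-- The differential `ω ↦ (∑ x_i dx_i) ∧ ω` of the Koszul complex of `x` on `V`; a cochain assigns
to each finite `s` the coefficient of `dx_s`. -/
def koszulDiff (x : ι → S) : (Finset ι → V) →ₗ[S] (Finset ι → V) where
  toFun ω s := ∑ i ∈ s, (koszulSign S s i * x i) • ω (s.erase i)
  map_add' ω η := by
    ext s
    simp [Finset.sum_add_distrib]
  map_smul' c ω := by
    ext s
    simp only [Pi.smul_apply, Finset.smul_sum, RingHom.id_apply]
    exact Finset.sum_congr rfl fun i _ => smul_comm _ _ _

theorem koszulDiff_apply (x : ι → S) (ω : Finset ι → V) (s : Finset ι) :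
    koszulDiff x ω s = ∑ i ∈ s, (koszulSign S s i * x i) • ω (s.erase i) :=
  rfl

theorem koszulDiff_congr (x : ι → S) {ω η : Finset ι → V} {s : Finset ι}
    (h : ∀ t ⊂ s, ω t = η t) : koszulDiff x ω s = koszulDiff x η s :=
  Finset.sum_congr rfl fun i hi => by rw [h _ (Finset.erase_ssubset hi)]

theorem koszulDiff_eq_zero (x : ι → S) {ω : Finset ι → V} {s : Finset ι}
    (h : ∀ t ⊂ s, ω t = 0) : koszulDiff x ω s = 0 := by
  rw [koszulDiff_congr x (η := 0) h, map_zero, Pi.zero_apply]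

theorem koszulDiff_insert (x : ι → S) (ω : Finset ι → V) {s : Finset ι} {i : ι}
    (hi : ∀ j ∈ s, j < i) :
    koszulDiff x ω (insert i s) =
      koszulDiff x (fun t => ω (insert i t)) s + ((-1) ^ s.card * x i) • ω s := by
  have notMem : i ∉ s := fun h => lt_irrefl i (hi i h)
  rw [koszulDiff_apply, Finset.sum_insert notMem, add_comm, Finset.erase_insert notMem,
    koszulSign_insert_self, koszulSign, Finset.filter_true_of_mem hi]
  congr 1
  refine Finset.sum_congr rfl fun j hj => ?_
  rw [koszulSign_insert_of_lt _ (hi j hj), Finset.erase_insert_of_ne (hi j hj).ne']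

theorem koszulDiff_neg_one_pow_card_smul (x : ι → S) (c : S) (ω : Finset ι → V) (s : Finset ι) :
    koszulDiff x (fun t => ((-1) ^ t.card * c) • ω t) s =
      -(((-1) ^ s.card * c) • koszulDiff x ω s) := by
  simp only [koszulDiff_apply, Finset.smul_sum, ← Finset.sum_neg_distrib]
  refine Finset.sum_congr rfl fun i hi => ?_
  rw [smul_smul, smul_smul, ← neg_smul, ← Finset.card_erase_add_one hi, pow_succ]
  congr 1
  ring

theorem koszulDiff_koszulDiff (x : ι → S) (ω : Finset ι → V) :
    koszulDiff x (koszulDiff x ω) = 0 := by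
  ext s
  induction s using Finset.induction_on_max generalizing ω with
  | empty => simp [koszulDiff_apply]
  | insert i s hi ih =>
    have split : koszulDiff x (fun t => koszulDiff x ω (insert i t)) s =
        koszulDiff x (koszulDiff x (fun t => ω (insert i t)) +
          fun t => ((-1) ^ t.card * x i) • ω t) s :=
      koszulDiff_congr x fun t ht => koszulDiff_insert x ω fun j hj => hi j (ht.1 hj)
    rw [koszulDiff_insert x _ hi, split, map_add, Pi.add_apply, ih,
      koszulDiff_neg_one_pow_card_smul, Pi.zero_apply, zero_add, neg_add_cancel, Pi.zero_apply]

/-- Contraction of a cochain with the `j`-th coordinate vector field. -/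
def koszulContract (S : Type*) [CommRing S] [Module S V] (j : ι) (ω : Finset ι → V)
    (s : Finset ι) : V :=
  if j ∈ s then 0 else koszulSign S s j • ω (insert j s)

theorem koszulDiff_koszulContract_add (x : ι → S) (j : ι) (ω : Finset ι → V) :
    koszulDiff x (koszulContract S j ω) + koszulContract S j (koszulDiff x ω) = x j • ω := by
  ext s
  by_cases hj : j ∈ s
  · rw [Pi.add_apply, koszulContract, if_pos hj, add_zero, koszulDiff_apply,
      Finset.sum_eq_single_of_mem j hj, koszulContract, if_neg (Finset.notMem_erase j s),
      Finset.insert_erase hj, koszulSign_erase_self, smul_smul, mul_right_comm,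
      koszulSign_mul_self, one_mul, Pi.smul_apply]
    intro i _ hij
    rw [koszulContract, if_pos (Finset.mem_erase.2 ⟨hij.symm, hj⟩), smul_zero]
  · rw [Pi.add_apply, koszulContract, if_neg hj, koszulDiff_apply x ω, Finset.sum_insert hj,
      smul_add, smul_smul, koszulSign_insert_self, ← mul_assoc, koszulSign_mul_self, one_mul,
      Finset.erase_insert hj, add_left_comm, Pi.smul_apply, add_eq_left, koszulDiff_apply,
      Finset.smul_sum, ← Finset.sum_add_distrib]
    refine Finset.sum_eq_zero fun i hi => ?_
    have hji : j ≠ i := by rintro rfl; exact hj hi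
    rw [koszulContract, if_neg fun h => hj (Finset.mem_of_mem_erase h),
      Finset.erase_insert_of_ne hji, smul_smul, smul_smul, ← add_smul]
    have coeff_eq_zero : koszulSign S s i * x i * koszulSign S (s.erase i) j +
        koszulSign S s j * (koszulSign S (insert j s) i * x i) = 0 := by
      linear_combination x i * koszulSign_erase_add_koszulSign_insert (S := S) hi hj
    rw [coeff_eq_zero, zero_smul]

theorem koszulContract_zero (j : ι) : koszulContract S j (0 : Finset ι → V) = 0 := by
  ext s
  simp [koszulContract]

theorem exists_koszulDiff_apply_eq_iff {x : ι → S} {A : Finset ι} {v : V} :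
    (∃ η, koszulDiff x η A = v) ↔ v ∈ Ideal.span (x '' A) • (⊤ : Submodule S V) := by
  rw [mem_span_image_smul_top_iff]
  constructor
  · rintro ⟨η, rfl⟩
    exact ⟨fun i => koszulSign S A i • η (A.erase i),
      Finset.sum_congr rfl fun i _ => by rw [smul_smul, mul_comm]⟩
  · rintro ⟨w, rfl⟩
    refine ⟨fun t => ∑ i ∈ A \ t, koszulSign S A i • w i, Finset.sum_congr rfl fun i hi => ?_⟩
    beta_reduce
    rw [Finset.sdiff_erase hi, Finset.sdiff_self, insert_empty_eq, Finset.sum_singleton,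
      smul_smul, mul_right_comm, koszulSign_mul_self, one_mul]

/-- Exactness below top degree of the Koszul complex of `(x i)_{i ∈ A}` on the localization of `V`
at `1 + I`. -/
def IsKoszulExactNear (I : Ideal S) (V : Type*) [AddCommGroup V] [Module S V] (x : ι → S)
    (A : Finset ι) : Prop :=
  ∀ ω : Finset ι → V, ω A = 0 → (∀ s ⊆ A, koszulDiff x ω s = 0) →
    ∃ h : S, h - 1 ∈ I ∧ ∃ η : Finset ι → V, ∀ s ⊆ A, h • ω s = koszulDiff x η s

variable {I : Ideal S} {x : ι → S} {A : Finset ι} {i : ι} {ω : Finset ι → V}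

theorem IsRegularNear.exists_smul_eq_koszulDiff (hx : IsRegularNear I V x)
    (hA : IsKoszulExactNear I V x A) (hi : ∀ j ∈ A, j < i)
    (hω : ∀ s ⊆ insert i A, koszulDiff x ω s = 0) :
    ∃ h : S, h - 1 ∈ I ∧ ∃ η : Finset ι → V, ∀ s ⊆ A, h • ω s = koszulDiff x η s := by
  have smul_mem : x i • ω A ∈ Ideal.span (x '' A) • (⊤ : Submodule S V) := by
    have top_coeff := hω _ subset_rfl
    rw [koszulDiff_insert x ω hi, mul_smul, add_eq_zero_iff_neg_eq] at top_coeff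
    have sign_smul_mem := neg_mem (exists_koszulDiff_apply_eq_iff.1
      ⟨fun t => ω (insert i t), rfl⟩ : koszulDiff x _ A ∈ _)
    rw [top_coeff] at sign_smul_mem
    simpa [smul_smul, ← mul_assoc, ← mul_pow] using
      Submodule.smul_mem _ ((-1) ^ A.card : S) sign_smul_mem
  obtain ⟨h₀, hh₀, mem⟩ := hx A i (fun h => lt_irrefl i (hi i h)) (ω A) smul_mem
  obtain ⟨η₀, hη₀⟩ := exists_koszulDiff_apply_eq_iff.2 mem
  obtain ⟨h₁, hh₁, η₁, hη₁⟩ := hA (h₀ • ω - koszulDiff x η₀)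
    (by rw [Pi.sub_apply, Pi.smul_apply, hη₀, sub_self])
    (fun s hs => by
      rw [map_sub, map_smul, koszulDiff_koszulDiff, sub_zero, Pi.smul_apply,
        hω s (hs.trans (Finset.subset_insert i A)), smul_zero])
  refine ⟨h₁ * h₀, mul_sub_one_mem hh₁ hh₀, h₁ • η₀ + η₁, fun s hs => ?_⟩
  rw [map_add, map_smul, Pi.add_apply, ← hη₁ s hs, Pi.sub_apply, Pi.smul_apply, Pi.smul_apply,
    smul_sub, smul_smul, add_sub_cancel]

theorem IsKoszulExactNear.exists_smul_eq_koszulDiff_of_eq_zero (hA : IsKoszulExactNear I V x A)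
    (hi : ∀ j ∈ A, j < i) (hω : ∀ s ⊆ insert i A, koszulDiff x ω s = 0)
    (top_eq_zero : ω (insert i A) = 0) (eq_zero : ∀ s ⊆ A, ω s = 0) :
    ∃ h : S, h - 1 ∈ I ∧ ∃ η : Finset ι → V, ∀ s ⊆ insert i A, h • ω s = koszulDiff x η s := by
  obtain ⟨h, hh, γ, hγ⟩ := hA (fun t => ω (insert i t)) top_eq_zero fun s hs => by
    simpa [koszulDiff_insert x ω fun j hj => hi j (hs hj), eq_zero s hs] using
      hω (insert i s) (Finset.insert_subset_insert i hs)
  refine ⟨h, hh, fun t => if i ∈ t then γ (t.erase i) else 0, fun s hs => ?_⟩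
  by_cases his : i ∈ s
  · obtain ⟨t, hit, rfl⟩ : ∃ t, i ∉ t ∧ insert i t = s :=
      ⟨s.erase i, Finset.notMem_erase i s, Finset.insert_erase his⟩
    have htA : t ⊆ A := (Finset.insert_subset_insert_iff hit).1 hs
    rw [koszulDiff_insert x _ fun j hj => hi j (htA hj), if_neg hit, smul_zero, add_zero,
      hγ t htA]
    refine koszulDiff_congr x fun u hu => ?_
    rw [if_pos (Finset.mem_insert_self i u), Finset.erase_insert fun h => hit (hu.1 h)]
  · rw [eq_zero s ((Finset.subset_insert_iff_of_notMem his).1 hs), smul_zero,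
      koszulDiff_eq_zero x fun u hu => if_neg fun h => his (hu.1 h)]

theorem IsRegularNear.isKoszulExactNear (hx : IsRegularNear I V x) (A : Finset ι) :
    IsKoszulExactNear I V x A := by
  induction A using Finset.induction_on_max with
  | empty =>
    refine fun ω hω _ => ⟨1, by simp, 0, fun s hs => ?_⟩
    rw [Finset.subset_empty.1 hs, hω, smul_zero, map_zero, Pi.zero_apply]
  | insert i A hi hA =>
    intro ω hω hd
    obtain ⟨h, hh, η', hη'⟩ := hx.exists_smul_eq_koszulDiff hA hi hd
    let η : Finset ι → V := fun t => if t ⊂ A then η' t else 0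
    have hη : ∀ s ⊆ A, koszulDiff x η s = h • ω s := fun s hs =>
      (koszulDiff_congr x fun t ht => if_pos (ht.trans_subset hs)).trans (hη' s hs).symm
    have top_eq_zero : koszulDiff x η (insert i A) = 0 := by
      have notMem : i ∉ A := fun h => lt_irrefl i (hi i h)
      rw [koszulDiff_insert x η hi, koszulDiff_eq_zero x fun t _ =>
        if_neg fun h : insert i t ⊂ A => notMem (h.1 (Finset.mem_insert_self i t)), zero_add,
        show η A = 0 from if_neg (ssubset_irrefl A), smul_zero]
    obtain ⟨h', hh', γ, hγ⟩ := hA.exists_smul_eq_koszulDiff_of_eq_zero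
      (ω := h • ω - koszulDiff x η) hi
      (fun s hs => by
        rw [map_sub, map_smul, koszulDiff_koszulDiff, sub_zero, Pi.smul_apply, hd s hs, smul_zero])
      (by rw [Pi.sub_apply, Pi.smul_apply, hω, top_eq_zero, smul_zero, sub_zero])
      (fun s hs => by rw [Pi.sub_apply, hη s hs, Pi.smul_apply, sub_self])
    refine ⟨h' * h, mul_sub_one_mem hh' hh, h' • η + γ, fun s hs => ?_⟩
    rw [map_add, map_smul, Pi.add_apply, ← hγ s hs, Pi.sub_apply, Pi.smul_apply, Pi.smul_apply,
      smul_sub, smul_smul, add_sub_cancel]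

/-- Contraction with the coordinate vector fields shows that `x i` kills the cohomology, so that
exactness near the zeros of `x` implies exactness. -/
theorem IsRegularNear.exists_koszulDiff_eq [Fintype ι]
    (hx : IsRegularNear (Ideal.span (Set.range x)) V x) (hω : ω Finset.univ = 0)
    (hd : koszulDiff x ω = 0) : ∃ η, koszulDiff x η = ω := by
  obtain ⟨h, hh, η, hη⟩ := hx.isKoszulExactNear Finset.univ ω hω fun s _ => congrFun hd s
  obtain ⟨c, hc⟩ := Ideal.mem_span_range_iff_exists_fun.1 hh
  have contract : ∀ j, koszulDiff x (koszulContract S j ω) = x j • ω := fun j => by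
    rw [← koszulDiff_koszulContract_add x j ω, hd, koszulContract_zero, add_zero]
  refine ⟨η - ∑ j, c j • koszulContract S j ω, ?_⟩
  rw [map_sub, map_sum, show koszulDiff x η = h • ω from
    funext fun s => (hη s (Finset.subset_univ s)).symm]
  simp only [map_smul, contract, smul_smul]
  rw [← Finset.sum_smul, hc, sub_smul, one_smul, sub_sub_cancel]

end Koszul

section WeylRegularity

variable {S V : Type*} [CommRing S] [AddCommGroup V] [Module S V] {P G : Submodule S V}
  {s : S} {m : AddMonoid.End V}

theorem pow_smul_pow_apply_sub_factorial_smul_mem (hm : ∀ v, s • m v - m (s • v) = v)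
    (hP : ∀ v ∈ P, m v ∈ P) {v : V} (hv : s • v ∈ P) (j : ℕ) :
    s ^ j • (m ^ j) v - j.factorial • v ∈ P := by
  induction j with
  | zero => simp
  | succ j ih =>
    let a : AddMonoid.End V := DistribSMul.toAddMonoidHom V s
    have commutator : (m ^ (j + 1)) (s • v) = s • (m ^ (j + 1)) v - (j + 1) • (m ^ j) v :=
      DFunLike.congr_fun (pow_succ_mul_of_mul_sub_mul_eq_one
        (show a * m - m * a = 1 from AddMonoidHom.ext hm) j) v
    have pow_apply_mem : ∀ k, (m ^ k) (s • v) ∈ P := fun k => by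
      induction k with
      | zero => exact hv
      | succ k ih => rw [pow_succ']; exact hP _ ih
    have sub_mem := P.smul_mem (s ^ j) (pow_apply_mem (j + 1))
    rw [commutator, smul_sub, smul_smul, ← pow_succ, smul_comm (s ^ j) (j + 1)] at sub_mem
    convert add_mem sub_mem (nsmul_mem ih (j + 1)) using 1
    rw [Nat.factorial_succ, mul_smul, smul_sub, sub_add_sub_cancel]

theorem exists_pow_smul_mem_of_fg [IsNoetherianRing S] (hG : G.FG) (P : Submodule S V) (s : S) :
    ∃ J, ∀ u ∈ G, s ^ (J + 1) • u ∈ P → s ^ J • u ∈ P := by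
  have : IsNoetherian S G := isNoetherian_of_fg_of_noetherian G hG
  let F : ℕ →o Submodule S G :=
    ⟨fun j => (P.comap (LinearMap.lsmul S V (s ^ j))).comap G.subtype,
      monotone_nat_of_le_succ fun j u hu => by
        simp only [Submodule.mem_comap, LinearMap.lsmul_apply] at hu ⊢
        rw [pow_succ', mul_smul]
        exact P.smul_mem s hu⟩
  obtain ⟨J, hJ⟩ := monotone_stabilizes_iff_noetherian.2 this F
  exact ⟨J, fun u hu h => (hJ (J + 1) J.le_succ).ge (show (⟨u, hu⟩ : G) ∈ F (J + 1) from h)⟩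

/-- Modulo `P`, the element `s ^ J • m ^ J v` is `J! • v` and is killed by `s`; a multiple of
`m ^ J v` lies in `G`, where `s`-torsion modulo `P` of order `J + 1` has order `J`. -/
theorem exists_smul_mem_of_smul_mem [IsNoetherianRing S] [Algebra ℚ S] {I : Ideal S}
    (hG : G.FG) (exists_smul_mem : ∀ v : V, ∃ h : S, h - 1 ∈ I ∧ h • v ∈ G)
    (hm : ∀ v, s • m v - m (s • v) = v) (hP : ∀ v ∈ P, m v ∈ P) {v : V} (hv : s • v ∈ P) :
    ∃ h : S, h - 1 ∈ I ∧ h • v ∈ P := by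
  obtain ⟨J, hJ⟩ := exists_pow_smul_mem_of_fg hG P s
  obtain ⟨h, hh, hmem⟩ := exists_smul_mem ((m ^ J) v)
  have factorial_mem := pow_smul_pow_apply_sub_factorial_smul_mem hm hP hv J
  have pow_succ_smul_mem : s ^ (J + 1) • h • (m ^ J) v ∈ P := by
    rw [smul_comm, pow_succ', mul_smul]
    have := add_mem (P.smul_mem s factorial_mem) (nsmul_mem hv J.factorial)
    rw [smul_sub, smul_comm s J.factorial, sub_add_cancel] at this
    exact P.smul_mem h this
  have pow_smul_mem := hJ _ hmem pow_succ_smul_mem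
  have factorial_smul_mem : J.factorial • h • v ∈ P := by
    have := sub_mem pow_smul_mem (P.smul_mem h factorial_mem)
    rwa [smul_sub, smul_comm (s ^ J) h, sub_sub_cancel, smul_comm h] at this
  refine ⟨h, hh, ?_⟩
  have := P.smul_mem (algebraMap ℚ S (J.factorial : ℚ)⁻¹) factorial_smul_mem
  rwa [← Nat.cast_smul_eq_nsmul S, smul_smul, ← map_natCast (algebraMap ℚ S), ← map_mul,
    inv_mul_cancel₀ (Nat.cast_ne_zero.2 J.factorial_ne_zero), map_one, one_smul] at this

end WeylRegularity

section TwistedModule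

variable {σ R K : Type*} [CommRing R] [Field K]

/-- `R[x]` as a module over the polynomial ring acting through the operators `∂ᵢ + ∂ᵢf`. -/
def TwistedModule (_f : MvPolynomial σ R) : Type _ := MvPolynomial σ R

namespace TwistedModule

instance (f : MvPolynomial σ R) : AddCommGroup (TwistedModule f) :=
  inferInstanceAs (AddCommGroup (MvPolynomial σ R))

instance (f : MvPolynomial σ R) : Module R (TwistedModule f) :=
  inferInstanceAs (Module R (MvPolynomial σ R))

instance (f : MvPolynomial σ R) : Module (MvPolynomial σ R) (TwistedModule f) :=
  Module.compHom (MvPolynomial σ R) (twistedAeval 1 f).toRingHom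

/-- The identity map from `R[x]` to the twisted module. -/
def of (f : MvPolynomial σ R) : MvPolynomial σ R ≃ₗ[R] TwistedModule f :=
  LinearEquiv.refl R _

theorem smul_of (f q p : MvPolynomial σ R) : q • of f p = of f (twistedAeval 1 f q p) :=
  rfl

theorem X_smul_of (f : MvPolynomial σ R) (i : σ) (p : MvPolynomial σ R) :
    (X i : MvPolynomial σ R) • of f p = of f (twistedPDeriv 1 f i p) := by
  rw [smul_of, twistedAeval_X]

instance (f : MvPolynomial σ R) : IsScalarTower R (MvPolynomial σ R) (TwistedModule f) :=
  ⟨fun c q v => LinearMap.congr_fun (map_smul (twistedAeval 1 f) c q) ((of f).symm v)⟩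

theorem of_mem_of_mem_twistedSpan {f : MvPolynomial σ R} {A : Set (WeylExponent σ)}
    {P : Submodule (MvPolynomial σ R) (TwistedModule f)}
    (hA : ∀ γ ∈ A, (monomial γ.1 1 : MvPolynomial σ R) • of f (monomial γ.2 1) ∈ P)
    {v : MvPolynomial σ R} (hv : v ∈ twistedSpan 1 f A) : of f v ∈ P := by
  have span_le : twistedSpan 1 f A ≤ (P.restrictScalars R).comap (of f).toLinearMap := by
    refine Submodule.span_le.2 ?_
    rintro _ ⟨γ, hγ, rfl⟩
    exact hA γ hγ
  exact span_le hv

/-- The submodule generated by the polynomials of degree at most `j`. -/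
def filtration (f : MvPolynomial σ R) (j : ℕ) :
    Submodule (MvPolynomial σ R) (TwistedModule f) :=
  Submodule.span _ ((fun β => of f (monomial β 1)) '' {β | β.degree ≤ j})

theorem of_monomial_mem_filtration (f : MvPolynomial σ R) {j : ℕ} {β : σ →₀ ℕ}
    (hβ : β.degree ≤ j) : of f (monomial β 1) ∈ filtration f j :=
  Submodule.subset_span ⟨β, hβ, rfl⟩

theorem filtration_fg [Finite σ] (f : MvPolynomial σ R) (j : ℕ) : (filtration f j).FG :=
  Submodule.fg_span ((Finsupp.finite_of_degree_le j).image _)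

theorem exists_mem_filtration {f : MvPolynomial σ R} (v : TwistedModule f) :
    ∃ j, v ∈ filtration f j := by
  obtain ⟨p, rfl⟩ := (of f).surjective v
  refine ⟨p.support.sup Finsupp.degree, ?_⟩
  suffices h : of f (∑ β ∈ p.support, coeff β p • monomial β 1) ∈
      filtration f (p.support.sup Finsupp.degree) by
    simpa only [smul_monomial, smul_eq_mul, mul_one, support_sum_monomial_coeff] using h
  rw [map_sum]
  refine sum_mem fun β hβ => ?_
  rw [map_smul]
  exact Submodule.smul_of_tower_mem _ _
    (of_monomial_mem_filtration f (Finset.le_sup (f := Finsupp.degree) hβ))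

theorem monomial_mem_span_range_X {α : σ →₀ ℕ} (hα : α ≠ 0) :
    (monomial α 1 : MvPolynomial σ R) ∈ Ideal.span (Set.range X) := by
  rw [← Set.image_univ, mem_ideal_span_X_image]
  intro m hm
  rw [Finset.mem_singleton.1 (support_monomial_subset hm)]
  simpa using Finsupp.ne_iff.1 hα

theorem of_mem_span_image_X_smul_top_iff {f v : MvPolynomial σ R} {A : Finset σ} :
    of f v ∈ Ideal.span (X '' A : Set (MvPolynomial σ R)) •
      (⊤ : Submodule (MvPolynomial σ R) (TwistedModule f)) ↔
      ∃ w : σ → MvPolynomial σ R, ∑ j ∈ A, twistedPDeriv 1 f j (w j) = v := by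
  rw [mem_span_image_smul_top_iff]
  constructor
  · rintro ⟨w, hw⟩
    refine ⟨fun j => (of f).symm (w j), (of f).injective ?_⟩
    simp only [← hw, map_sum, ← X_smul_of, LinearEquiv.apply_symm_apply]
  · rintro ⟨w, rfl⟩
    exact ⟨fun j => of f (w j), by simp only [X_smul_of, map_sum]⟩

theorem of_X_mul_mem {f v : MvPolynomial σ R} {A : Finset σ} {i : σ} (hi : i ∉ A)
    (hv : of f v ∈ Ideal.span (X '' A : Set (MvPolynomial σ R)) •
      (⊤ : Submodule (MvPolynomial σ R) (TwistedModule f))) :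
    of f (X i * v) ∈ Ideal.span (X '' A : Set (MvPolynomial σ R)) •
      (⊤ : Submodule (MvPolynomial σ R) (TwistedModule f)) := by
  obtain ⟨w, rfl⟩ := of_mem_span_image_X_smul_top_iff.1 hv
  refine of_mem_span_image_X_smul_top_iff.2 ⟨fun j => X i * w j, ?_⟩
  rw [Finset.mul_sum]
  refine Finset.sum_congr rfl fun j hj => ?_
  have commute := commute_mulLeft_X_twistedPDeriv 1 f (ne_of_mem_of_not_mem hj hi).symm
  exact (LinearMap.congr_fun commute (w j)).symm

theorem filtration_le_sup_smul [Fintype σ] {f : MvPolynomial σ R} {N : σ → ℕ}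
    (hN : ∀ i, X i ^ N i ∈ twistedSpan 1 f (lowerExponents σ (N i))) (j : ℕ) :
    filtration f j ≤ filtration f (∑ i, N i) ⊔
      (Ideal.span (Set.range X) : Ideal (MvPolynomial σ R)) • filtration f j := by
  suffices h : ∀ d, ∀ β : σ →₀ ℕ, β.degree = d → d ≤ j → of f (monomial β 1) ∈
      filtration f (∑ i, N i) ⊔
        (Ideal.span (Set.range X) : Ideal (MvPolynomial σ R)) • filtration f j by
    refine Submodule.span_le.2 ?_
    rintro _ ⟨β, hβ, rfl⟩
    exact h _ β rfl hβ
  intro d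
  induction d using Nat.strong_induction_on with
  | _ d ih =>
    rintro β rfl hj
    by_cases hβ : β.degree ≤ ∑ i, N i
    · exact Submodule.mem_sup_left (of_monomial_mem_filtration f hβ)
    refine of_mem_of_mem_twistedSpan ?_
      (monomial_mem_twistedSpan_lowerExponents hN (not_le.1 hβ))
    rintro γ (hγ | ⟨hα, hγ⟩)
    · exact Submodule.smul_mem _ _ (ih _ hγ _ rfl (hγ.le.trans hj))
    · exact Submodule.mem_sup_right (Submodule.smul_mem_smul (monomial_mem_span_range_X hα)
        (of_monomial_mem_filtration f (hγ.trans hj)))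

theorem exists_smul_mem_filtration [Fintype σ] {f : MvPolynomial σ R} {N : σ → ℕ}
    (hN : ∀ i, X i ^ N i ∈ twistedSpan 1 f (lowerExponents σ (N i))) (v : TwistedModule f) :
    ∃ h : MvPolynomial σ R, h - 1 ∈ Ideal.span (Set.range X) ∧
      h • v ∈ filtration f (∑ i, N i) := by
  obtain ⟨j, hj⟩ := exists_mem_filtration v
  obtain ⟨h, hh, smul_le⟩ := Submodule.exists_sub_one_mem_and_smul_le_of_fg_of_le_sup
    (filtration_fg f j) le_rfl (filtration_le_sup_smul hN j)
  exact ⟨h, hh, smul_le (Submodule.smul_mem_pointwise_smul _ _ _ hj)⟩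

theorem isRegularNear [Finite σ] [CharZero K] {f : MvPolynomial σ K} {N : σ → ℕ}
    (hN : ∀ i, X i ^ N i ∈ twistedSpan 1 f (lowerExponents σ (N i))) :
    IsRegularNear (Ideal.span (Set.range X)) (TwistedModule f)
      (X : σ → MvPolynomial σ K) := by
  have := Fintype.ofFinite σ
  intro A i hi v hv
  let m : AddMonoid.End (TwistedModule f) :=
    ((of f).conj (LinearMap.mulLeft K (X i))).toAddMonoidHom
  have m_of (p) : m (of f p) = of f (X i * p) := rfl
  refine exists_smul_mem_of_smul_mem (m := m) (filtration_fg f _)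
    (exists_smul_mem_filtration hN) (fun v => ?_) (fun v hv => ?_) hv
  · obtain ⟨p, rfl⟩ := (of f).surjective v
    rw [m_of, X_smul_of, X_smul_of, m_of, ← map_sub]
    exact congrArg (of f) (LinearMap.congr_fun (twistedPDeriv_mul_mulLeft_X_sub f i) p)
  · obtain ⟨p, rfl⟩ := (of f).surjective v
    exact of_X_mul_mem hi hv

end TwistedModule

end TwistedModule

section TwistedDeRham

variable {n k : ℕ} {R K : Type*} [CommRing R] [Field K]

theorem mem_cobounds_of_dTwist_apply_eq {α : Fin n → MvPolynomial (Fin n) R} {ω η : Form n R}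
    (hω : ω ∈ formDeg n R k) (hη : ∀ s : Finset (Fin n), s.card = k → dTwist α η s = ω s) :
    ω ∈ cobounds α k := by
  refine ⟨fun t => if t.card + 1 = k then η t else 0, fun t ht => if_neg (by omega), ?_⟩
  ext1 s
  by_cases hs : s.card = k
  · rw [← hη s hs]
    refine Finset.sum_congr rfl fun i hi => ?_
    beta_reduce
    rw [if_pos ((Finset.card_erase_add_one hi).trans hs)]
  · rw [hω s hs]
    refine Finset.sum_eq_zero fun i hi => ?_
    beta_reduce
    rw [if_neg ((Finset.card_erase_add_one hi).trans_ne hs), map_zero, mul_zero, add_zero,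
      mul_zero]

theorem of_dTwist_apply (f : MvPolynomial (Fin n) R) (ω : Form n R) (s : Finset (Fin n)) :
    TwistedModule.of f (dTwist (grad f) ω s) =
      koszulDiff (X : Fin n → MvPolynomial (Fin n) R) (fun t => TwistedModule.of f (ω t)) s := by
  refine (map_sum (TwistedModule.of f) _ s).trans (Finset.sum_congr rfl fun i _ => ?_)
  rw [mul_smul, TwistedModule.X_smul_of, twistedPDeriv_apply, one_smul, koszulSign, sgn, grad]
  rcases neg_one_pow_eq_or (MvPolynomial (Fin n) R) (s.filter (· < i)).card with h | h
  · rw [h, one_mul, one_smul]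
  · rw [h, neg_one_mul, neg_one_smul, map_neg]

theorem exists_dTwist_grad_eq [CharZero K] {f : MvPolynomial (Fin n) K}
    (hX : ∀ i, ∃ N, X i ^ N ∈ twistedSpan 1 f (lowerExponents (Fin n) N)) {ω : Form n K}
    (hω : ω Finset.univ = 0) (hd : dTwist (grad f) ω = 0) : ∃ η, dTwist (grad f) η = ω := by
  choose N hN using hX
  obtain ⟨η, hη⟩ := (TwistedModule.isRegularNear hN).exists_koszulDiff_eq
    (ω := fun t => TwistedModule.of f (ω t)) (by rw [hω, map_zero])
    (funext fun s => by rw [← of_dTwist_apply, hd, Pi.zero_apply, map_zero, Pi.zero_apply])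
  refine ⟨fun t => (TwistedModule.of f).symm (η t),
    funext fun s => (TwistedModule.of f).injective ?_⟩
  simp only [of_dTwist_apply, LinearEquiv.apply_symm_apply, hη]

theorem subsingleton_Hf_of_ne [CharZero K] {f : MvPolynomial (Fin n) K}
    (hX : ∀ i, ∃ N, X i ^ N ∈ twistedSpan 1 f (lowerExponents (Fin n) N)) (hk : k ≠ n) :
    Subsingleton (Hf f k) := by
  rw [Submodule.Quotient.subsingleton_iff, eq_top_iff]
  rintro ⟨ω, hω, hd⟩ -
  obtain ⟨η, rfl⟩ := exists_dTwist_grad_eq hX (hω Finset.univ (by simpa using hk.symm)) hd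
  exact mem_cobounds_of_dTwist_apply_eq hω fun _ _ => rfl

theorem mem_twistedRange_one_iff {f v : MvPolynomial (Fin n) R} :
    v ∈ twistedRange 1 f ↔ ∃ η : Form n R, dTwist (grad f) η Finset.univ = v := by
  rw [twistedRange, mem_iSup_range_iff, ← TwistedModule.of_mem_span_image_X_smul_top_iff,
    ← exists_koszulDiff_apply_eq_iff]
  constructor
  · rintro ⟨η, hη⟩
    refine ⟨fun t => (TwistedModule.of f).symm (η t), (TwistedModule.of f).injective ?_⟩
    simp only [of_dTwist_apply, LinearEquiv.apply_symm_apply, hη]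
  · rintro ⟨η, rfl⟩
    exact ⟨_, (of_dTwist_apply f η Finset.univ).symm⟩

theorem single_univ_mem_cocycles (α : Fin n → MvPolynomial (Fin n) R) (v : MvPolynomial (Fin n) R) :
    (Pi.single Finset.univ v : Form n R) ∈ cocycles α n := by
  refine ⟨fun s hs => ?_, funext fun s => ?_⟩
  · have hne : s ≠ Finset.univ := fun h => hs (h ▸ Finset.card_fin n)
    rw [Pi.single_eq_of_ne hne]
  refine Finset.sum_eq_zero fun i _ => ?_
  have erase_ne : s.erase i ≠ Finset.univ :=
    fun h => Finset.notMem_erase i s (h ▸ Finset.mem_univ i)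
  rw [Pi.single_eq_of_ne erase_ne, map_zero, mul_zero, add_zero, mul_zero]

theorem mem_cobounds_grad_iff {f : MvPolynomial (Fin n) R} {ω : Form n R}
    (hω : ω ∈ formDeg n R n) :
    ω ∈ cobounds (grad f) n ↔ ω Finset.univ ∈ twistedRange 1 f := by
  constructor
  · rintro ⟨η, -, rfl⟩
    exact mem_twistedRange_one_iff.2 ⟨η, rfl⟩
  · intro h
    obtain ⟨η, hη⟩ := mem_twistedRange_one_iff.1 h
    refine mem_cobounds_of_dTwist_apply_eq (η := η) hω fun s hs => ?_
    rwa [(Finset.card_eq_iff_eq_univ s).1 (hs.trans (Fintype.card_fin n).symm)]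

/-- The isomorphism `H^n_f ≃ R[x] / ∑ᵢ (∂ᵢ + ∂ᵢf) R[x]` reading off the coefficient of
`dx_1 ∧ ⋯ ∧ dx_n`. -/
def topCohomologyEquiv (f : MvPolynomial (Fin n) R) :
    Hf f n ≃ₗ[R] MvPolynomial (Fin n) R ⧸ twistedRange 1 f :=
  let g := (twistedRange 1 f).mkQ ∘ₗ LinearMap.proj Finset.univ ∘ₗ (cocycles (grad f) n).subtype
  have ker_eq : (cobounds (grad f) n).comap (cocycles (grad f) n).subtype = LinearMap.ker g := by
    ext ω
    rw [Submodule.mem_comap, LinearMap.mem_ker]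
    exact (mem_cobounds_grad_iff ω.2.1).trans (Submodule.Quotient.mk_eq_zero _).symm
  have surjective : Function.Surjective g := fun y => by
    obtain ⟨v, rfl⟩ := Submodule.mkQ_surjective _ y
    exact ⟨⟨_, single_univ_mem_cocycles (grad f) v⟩, by simp [g]⟩
  (Submodule.quotEquivOfEq _ _ ker_eq).trans (g.quotKerEquivOfSurjective surjective)

theorem twistedRange_zero {σ : Type*} [Finite σ] (f : MvPolynomial σ R) :
    twistedRange 0 f = (Ideal.span (Set.range fun i => pderiv i f)).restrictScalars R := by
  have := Fintype.ofFinite σ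
  ext v
  rw [twistedRange, mem_iSup_range_iff, Submodule.restrictScalars_mem,
    Ideal.mem_span_range_iff_exists_fun]
  simp only [twistedPDeriv_apply, zero_smul, zero_add, mul_comm]

end TwistedDeRham

/-- Let `f ∈ ℂ[x_1,…,x_n]` be tame: the Euclidean norm of
the gradient `∇f` is bounded below by some `δ > 0` outside some ball of
radius `C`.  Then `H^k_f(ℂ) = 0` for `k ≠ n` and `H^n_f(ℂ)` is isomorphic to
the Milnor (Jacobian) ring `ℂ[x_1,…,x_n]/(∂_1 f, …, ∂_n f)`; in particular
`dim_ℂ H^n_f(ℂ)` equals the dimension of the Milnor ring. -/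
theorem tame_twisted_deRham_is_milnor_ring {n : ℕ} (hn : 0 < n)
    (f : MvPolynomial (Fin n) ℂ)
    (htame : ∃ C δ : ℝ, 0 < C ∧ 0 < δ ∧
      ∀ x : Fin n → ℂ,
        C ≤ Real.sqrt (∑ i, ‖x i‖ ^ 2) →
        δ ≤ Real.sqrt (∑ i, ‖eval x (pderiv i f)‖ ^ 2)) :
    (∀ k : ℕ, k ≠ n → Subsingleton (Hf f k)) ∧
    Nonempty
      ((Hf f n) ≃ₗ[ℂ]
        (MvPolynomial (Fin n) ℂ ⧸
          Ideal.span (Set.range fun i => pderiv i f))) ∧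
    Module.rank ℂ (Hf f n) =
      Module.rank ℂ
        (MvPolynomial (Fin n) ℂ ⧸
          Ideal.span (Set.range fun i => pderiv i f)) := by
  have hf : IsTame f := htame
  have hX₀ (i : Fin n) := hf.exists_X_pow_mem_lowerExponents_zero i
  have hX₁ (i : Fin n) : ∃ N, X i ^ N ∈ twistedSpan 1 f (lowerExponents (Fin n) N) :=
    (hX₀ i).elim fun _ h => exists_X_pow_mem_lowerExponents_one h
  have := finite_quotient_twistedRange hX₀
  have := finite_quotient_twistedRange hX₁
  let e : Hf f n ≃ₗ[ℂ]
      MvPolynomial (Fin n) ℂ ⧸ Ideal.span (Set.range fun i => pderiv i f) :=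
    topCohomologyEquiv f ≪≫ₗ
      .ofFinrankEq _ _ (finrank_quotient_twistedRange_one_eq_finrank_zero hX₀ hX₁) ≪≫ₗ
      Submodule.quotEquivOfEq _ _ (twistedRange_zero f) ≪≫ₗ
      Submodule.Quotient.restrictScalarsEquiv ℂ _
  exact ⟨fun k hk => subsingleton_Hf_of_ne hX₁ hk, ⟨e⟩, e.rank_eq⟩

end
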